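/- There exist constants ε = ε(n,d) > 0 and C = C(n,d) ≥ 1 with the following property (local Ahlfors regularity). Let E be a coral plain almost minimal set of dimension d in an open set U ⊆ ℝⁿ with gauge function h. Then for every x ∈ E and every r ∈ (0,1) such that B(x,2r) ⊆ U and h(2r) ≤ ε, one has C⁻¹ r^d ≤ H^d(E ∩ B(x,r)) ≤ C r^d. -/

import Mathlib

/-!
Both inequalities come from testing almost minimality against Federer-Fleming projections of `E`
in balls, at a grid scale `δ` to be chosen.

*The competitors.* After rescaling by `δ⁻¹`, work with the unit grid of `ℝⁿ` in a ball of radius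
`R`. A point is pushed away from the centres of the cells by the coordinatewise dilation
`dil μ`, which expands each unit interval around its midpoint by `1 / (2 μ)` and truncates.
Taking for `μ` the sup-norm distance `kthDist (k + 1)` to the points with `k + 1` half-integer
coordinates projects everything to the `k`-skeleton in one formula, with Lipschitz constant of
order `1 / μ`. A cut-off makes the map the identity near the boundary of the ball (`outerDef`).
When `E` also avoids the points with `d` half-integer coordinates, a second map, acting face by
face, continues to the `(d - 1)`-skeleton (`innerDef`).

*Choosing the grid.* Averaging over translations of the grid, the integral of the `d`-th inverse
power of the distance to the set with `d + 1` half-integer coordinates is finite, because this set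
has codimension `d + 1`; hence some translate does not increase the mass of a given set by more
than a constant factor (`exists_translation`). The set with `k` half-integer coordinates is avoided
by `E` as soon as the translations for which it is not have measure at most `1 / 2`. That measure is
controlled by the projections of `E` to the `k`-dimensional coordinate planes: it is zero for
`k = d + 1`, and small for `k = d` if `E` has small mass in the ball.

*Decay inequalities.* Write `m s` for the mass of `E` in the closed ball of radius `s` and
`W = 6 n + 1`. The image of the interior part of `E` lies in the `d`-skeleton, of mass at most
`C δ ^ d (s / δ) ^ n`, or in the negligible `(d - 1)`-skeleton, so that only the shell of width
`W δ` contributes otherwise: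
`m s ≤ C (m s - m (s - W δ)) + C δ ^ d (s / δ) ^ n + h s * s ^ d`, where the middle term is absent
when `m s ≤ c δ ^ d` (`upper_decay`, `lower_decay`). Filling the hole gives a contraction
`m (s - W δ) ≤ θ m s + ...` with `θ < 1`.

*Conclusion.* The upper bound follows by iterating with `δ` proportional to the distance `2 r - s`
to the boundary (`upper_iteration`). For the lower bound, a fixed number of contractions shows that
a small density at scale `r` persists at scale `r / 2` (`lower_iteration`). If the mass of `E` in
`ball x r` were too small, `E` would therefore have small density at all small scales around every
point of `ball x (r / 2)`, hence zero measure there (`measure_zero_of_density`), which contradicts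
that `E` is coral.
-/

open Set Metric MeasureTheory Filter
open scoped ENNReal NNReal RealInnerProductSpace

attribute [local instance] Classical.propDecidable

noncomputable section

variable {n : ℕ}

/-- A (plain) deformation `φ` of the set `E` in the set `B`:
a one-parameter family of maps, continuous on `E × [0,1]`, starting from the identity,
equal to the identity outside of `B`, mapping `E ∩ B` into `B`, and whose endpoint is
Lipschitz. -/
def IsDeformationIn (E B : Set (EuclideanSpace ℝ (Fin n)))
    (φ : ℝ → EuclideanSpace ℝ (Fin n) → EuclideanSpace ℝ (Fin n)) : Prop :=
  ContinuousOn (fun p : ℝ × EuclideanSpace ℝ (Fin n) => φ p.1 p.2) (Icc (0:ℝ) 1 ×ˢ E) ∧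
  (∀ y ∈ E, φ 0 y = y) ∧
  (∀ t ∈ Icc (0:ℝ) 1, ∀ y ∈ E \ B, φ t y = y) ∧
  (∀ t ∈ Icc (0:ℝ) 1, φ t '' (E ∩ B) ⊆ B) ∧
  (∃ K : ℝ≥0, LipschitzOnWith K (φ 1) E)

/-- A gauge function: nondecreasing on `(0,∞)` and tending to `0` at `0⁺`. -/
def IsGauge (h : ℝ → ℝ≥0∞) : Prop :=
  (∀ ⦃s t : ℝ⦄, 0 < s → s ≤ t → h s ≤ h t) ∧
  Tendsto h (nhdsWithin 0 (Ioi 0)) (nhds 0)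

/-- `E` is a plain almost minimal set of dimension `d` in `U` with gauge `h`. -/
def IsPlainAlmostMinimal (d : ℕ) (U : Set (EuclideanSpace ℝ (Fin n)))
    (h : ℝ → ℝ≥0∞) (E : Set (EuclideanSpace ℝ (Fin n))) : Prop :=
  E ⊆ U ∧ closure E ∩ U ⊆ E ∧
  (∀ (x : EuclideanSpace ℝ (Fin n)) (r : ℝ), μH[(d:ℝ)] (E ∩ ball x r) < ⊤) ∧
  ∀ (x : EuclideanSpace ℝ (Fin n)) (r : ℝ)
    (φ : ℝ → EuclideanSpace ℝ (Fin n) → EuclideanSpace ℝ (Fin n)),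
    0 < r → closedBall x r ⊆ U → IsDeformationIn E (closedBall x r) φ →
    μH[(d:ℝ)] (E ∩ closedBall x r) ≤
      μH[(d:ℝ)] ((φ 1 '' E) ∩ closedBall x r) + h r * ENNReal.ofReal r ^ d

/-- `E` is a plain minimal set of dimension `d` in `U` (gauge `h ≡ 0`). -/
def IsPlainMinimal (d : ℕ) (U E : Set (EuclideanSpace ℝ (Fin n))) : Prop :=
  IsPlainAlmostMinimal d U (fun _ => 0) E

/-- `E` is coral: every ball centered on `E` meets `E` in positive `H^d` measure. -/
def IsCoral (d : ℕ) (E : Set (EuclideanSpace ℝ (Fin n))) : Prop :=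
  ∀ y ∈ E, ∀ ρ : ℝ, 0 < ρ → 0 < μH[(d:ℝ)] (E ∩ ball y ρ)

/-- The normalized local Hausdorff distance `d_{x,r}(E,F)`. -/
def locHausDist (x : EuclideanSpace ℝ (Fin n)) (r : ℝ)
    (E F : Set (EuclideanSpace ℝ (Fin n))) : ℝ :=
  r⁻¹ * (⨆ y : ↥(F ∩ ball x r), infDist y.1 E) +
  r⁻¹ * (⨆ y : ↥(E ∩ ball x r), infDist y.1 F)

/-- Local convergence of a sequence of closed sets in `U`. -/
def ConvergesLocallyIn (U : Set (EuclideanSpace ℝ (Fin n)))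
    (Ek : ℕ → Set (EuclideanSpace ℝ (Fin n)))
    (Elim : Set (EuclideanSpace ℝ (Fin n))) : Prop :=
  ∀ (x : EuclideanSpace ℝ (Fin n)) (r : ℝ), 0 < r → closedBall x r ⊆ U →
    Tendsto (fun k => locHausDist x r (Ek k) Elim) atTop (nhds 0)

/-- `E` is `d`-rectifiable. -/
def IsRectifiableOfDim (d : ℕ) (E : Set (EuclideanSpace ℝ (Fin n))) : Prop :=
  ∃ (Z : Set (EuclideanSpace ℝ (Fin n)))
    (f : ℕ → EuclideanSpace ℝ (Fin d) → EuclideanSpace ℝ (Fin n)),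
    μH[(d:ℝ)] Z = 0 ∧ (∀ i, ∃ K : ℝ≥0, LipschitzWith K (f i)) ∧
    E ⊆ Z ∪ ⋃ i, range (f i)

/-- A cone centered at `x`. -/
def IsConeAt (x : EuclideanSpace ℝ (Fin n)) (X : Set (EuclideanSpace ℝ (Fin n))) : Prop :=
  ∀ y ∈ X, ∀ t : ℝ, 0 < t → x + t • (y - x) ∈ X

/-- A minimal cone of dimension `d` centered at `x`. -/
def IsMinimalCone (d : ℕ) (x : EuclideanSpace ℝ (Fin n))
    (X : Set (EuclideanSpace ℝ (Fin n))) : Prop :=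
  IsConeAt x X ∧ IsCoral d X ∧ IsPlainMinimal d univ X

/-- `X` is a blow-up limit of `E` at `x`. -/
def IsBlowUpLimitAt (E : Set (EuclideanSpace ℝ (Fin n))) (x : EuclideanSpace ℝ (Fin n))
    (X : Set (EuclideanSpace ℝ (Fin n))) : Prop :=
  IsClosed X ∧
  ∃ r : ℕ → ℝ, (∀ k, 0 < r k) ∧ Tendsto r atTop (nhds 0) ∧
    ∀ (z : EuclideanSpace ℝ (Fin n)) (ρ : ℝ), 0 < ρ →
      Tendsto (fun k => locHausDist z ρ ((fun y => (r k)⁻¹ • (y - x)) '' E) X)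
        atTop (nhds 0)

/-- A sliding deformation of `E` in `B` with respect to the sliding boundary `Γ`. -/
def IsSlidingDeformationIn (Γ E B : Set (EuclideanSpace ℝ (Fin n)))
    (φ : ℝ → EuclideanSpace ℝ (Fin n) → EuclideanSpace ℝ (Fin n)) : Prop :=
  IsDeformationIn E B φ ∧ ∀ t ∈ Icc (0:ℝ) 1, ∀ y ∈ E ∩ Γ, φ t y ∈ Γ

/-- `E` is a sliding almost minimal set of dimension `d` in `U`, with sliding boundary `Γ`
and gauge `h`. -/
def IsSlidingAlmostMinimal (d : ℕ) (Γ U : Set (EuclideanSpace ℝ (Fin n)))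
    (h : ℝ → ℝ≥0∞) (E : Set (EuclideanSpace ℝ (Fin n))) : Prop :=
  E ⊆ U ∧ closure E ∩ U ⊆ E ∧
  (∀ (x : EuclideanSpace ℝ (Fin n)) (r : ℝ), μH[(d:ℝ)] (E ∩ ball x r) < ⊤) ∧
  ∀ (x : EuclideanSpace ℝ (Fin n)) (r : ℝ)
    (φ : ℝ → EuclideanSpace ℝ (Fin n) → EuclideanSpace ℝ (Fin n)),
    0 < r → closedBall x r ⊆ U → IsSlidingDeformationIn Γ E (closedBall x r) φ →
    μH[(d:ℝ)] (E ∩ closedBall x r) ≤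
      μH[(d:ℝ)] ((φ 1 '' E) ∩ closedBall x r) + h r * ENNReal.ofReal r ^ d

/-- `Φ` is a `C^{1+a}` diffeomorphism from the open set `V` onto its (open) image:
`Φ` is injective and `C^1` with locally `a`-Hölder derivative on `V`, and it admits an
inverse with the same properties on the image. -/
def IsC1HolderDiffeoOn (a : ℝ) (Φ : EuclideanSpace ℝ (Fin n) → EuclideanSpace ℝ (Fin n))
    (V : Set (EuclideanSpace ℝ (Fin n))) : Prop :=
  IsOpen (Φ '' V) ∧ InjOn Φ V ∧ ContDiffOn ℝ 1 Φ V ∧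
  (∀ y ∈ V, ∃ s ∈ nhdsWithin y V, ∃ C : ℝ≥0,
    HolderOnWith C a.toNNReal (fderiv ℝ Φ) s) ∧
  ∃ Ψ : EuclideanSpace ℝ (Fin n) → EuclideanSpace ℝ (Fin n),
    (∀ y ∈ V, Ψ (Φ y) = y) ∧ ContDiffOn ℝ 1 Ψ (Φ '' V) ∧
    (∀ z ∈ Φ '' V, ∃ s ∈ nhdsWithin z (Φ '' V), ∃ C : ℝ≥0,
      HolderOnWith C a.toNNReal (fderiv ℝ Ψ) s)

/-- The closed cube of sidelength `s` in `ℝ^k`, with lower corner at the origin. -/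
def unitCube (k : ℕ) (s : ℝ) : Set (EuclideanSpace ℝ (Fin k)) :=
  {y | ∀ i, y i ∈ Icc (0:ℝ) s}

/-- The concentric cube with half the sidelength. -/
def halfCube (k : ℕ) (s : ℝ) : Set (EuclideanSpace ℝ (Fin k)) :=
  {y | ∀ i, y i ∈ Icc (s/4) (3*s/4)}

/-- `F` is totally `d`-unrectifiable. -/
def TotallyUnrectifiable (d : ℕ) (F : Set (EuclideanSpace ℝ (Fin n))) : Prop :=
  ∀ f : EuclideanSpace ℝ (Fin d) → EuclideanSpace ℝ (Fin n),
    (∃ K : ℝ≥0, LipschitzWith K f) → μH[(d:ℝ)] (F ∩ range f) = 0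

/-- The closed half plane bounded by the line `ℝv` in the direction `w`. -/
def slidingHalfPlane (v w : EuclideanSpace ℝ (Fin n)) : Set (EuclideanSpace ℝ (Fin n)) :=
  {y | ∃ t s : ℝ, 0 ≤ s ∧ y = t • v + s • w}


/-! ### One-dimensional dilations of the unit grid -/

/-- Distance from `t` to the nearest half-integer. -/
def halfDist (t : ℝ) : ℝ := |Int.fract t - 1 / 2|

/-- Dilation of `[0,1]` about `1/2` by the factor `1/(2μ)`, clipped to `[0,1]`. -/
def cellDil (u μ : ℝ) : ℝ := max 0 (min 1 (1 / 2 + (u - 1 / 2) / (2 * μ)))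

/-- The map of the line which performs `cellDil · μ` in each unit cell `[k, k+1]`, `k ∈ ℤ`.
It is the identity for `μ = 1/2`, and sends every point at distance at least `μ` from the
half-integers to an integer. -/
def gridDil (t μ : ℝ) : ℝ := ⌊t⌋ + cellDil (Int.fract t) μ

lemma halfDist_nonneg (t : ℝ) : 0 ≤ halfDist t := abs_nonneg _

lemma halfDist_le_half (t : ℝ) : halfDist t ≤ 1 / 2 := by
  have h1 := Int.fract_nonneg t
  have h2 := (Int.fract_lt_one t).le
  rw [halfDist, abs_le]; constructor <;> linarith

lemma halfDist_le (t : ℝ) (k : ℤ) : halfDist t ≤ |t - k - 1 / 2| := by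
  have h0 := halfDist_le_half t
  have ht := Int.floor_add_fract t
  by_cases h : ⌊t⌋ = k
  · rw [halfDist, ← h]
    rw [show t - ⌊t⌋ - 1 / 2 = Int.fract t - 1 / 2 by linarith]
  · have h1 : (1 : ℝ) ≤ |((⌊t⌋ - k : ℤ) : ℝ)| := by
      rw [← Int.cast_abs]; exact_mod_cast Int.one_le_abs (sub_ne_zero.mpr h)
    have h2 : ((⌊t⌋ - k : ℤ) : ℝ) = (t - k - 1 / 2) - (Int.fract t - 1 / 2) := by
      push_cast; linarith
    rw [h2] at h1
    have h3 := abs_sub (t - k - 1 / 2) (Int.fract t - 1 / 2)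
    rw [← halfDist] at h3
    linarith

lemma halfDist_lip (s t : ℝ) : halfDist s ≤ halfDist t + |s - t| := by
  have h := halfDist_le s ⌊t⌋
  have h2 : s - ⌊t⌋ - 1 / 2 = (Int.fract t - 1 / 2) + (s - t) := by
    have := Int.floor_add_fract t; linarith
  rw [h2] at h
  exact h.trans (abs_add_le _ _)

lemma cellDil_mem (u μ : ℝ) : 0 ≤ cellDil u μ ∧ cellDil u μ ≤ 1 :=
  ⟨le_max_left _ _, max_le zero_le_one (min_le_left _ _)⟩

lemma cellDil_half {u : ℝ} (h0 : 0 ≤ u) (h1 : u ≤ 1) : cellDil u (1 / 2) = u := by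
  have : 1 / 2 + (u - 1 / 2) / (2 * (1 / 2)) = u := by ring
  rw [cellDil, this, min_eq_right h1, max_eq_right h0]

lemma cellDil_eq_one {u μ : ℝ} (hμ : 0 < μ) (h : μ ≤ u - 1 / 2) : cellDil u μ = 1 := by
  have : 1 / 2 ≤ (u - 1 / 2) / (2 * μ) := by
    rw [le_div_iff₀ (by positivity)]; linarith
  rw [cellDil, min_eq_left (by linarith), max_eq_right zero_le_one]

lemma cellDil_eq_zero {u μ : ℝ} (hμ : 0 < μ) (h : u - 1 / 2 ≤ -μ) : cellDil u μ = 0 := by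
  have : (u - 1 / 2) / (2 * μ) ≤ -1 / 2 := by
    rw [div_le_iff₀ (by positivity)]; linarith
  rw [cellDil, max_eq_left]
  exact (min_le_right _ _).trans (by linarith)

lemma cellDil_eq_mid {u μ : ℝ} (hμ : 0 < μ) (h1 : -μ ≤ u - 1 / 2) (h2 : u - 1 / 2 ≤ μ) :
    cellDil u μ = 1 / 2 + (u - 1 / 2) / (2 * μ) := by
  have h3 : (u - 1 / 2) / (2 * μ) ≤ 1 / 2 := by
    rw [div_le_iff₀ (by positivity)]; linarith
  have h4 : -1 / 2 ≤ (u - 1 / 2) / (2 * μ) := by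
    rw [le_div_iff₀ (by positivity)]; linarith
  rw [cellDil, min_eq_right (by linarith), max_eq_right (by linarith)]

lemma clip_lip (a b : ℝ) : |max 0 (min 1 a) - max 0 (min 1 b)| ≤ |a - b| := by
  have h1 := abs_max_sub_max_le_abs (min 1 a) (min 1 b) 0
  have h2 := abs_min_sub_min_le_max 1 a 1 b
  rw [max_comm 0, max_comm 0]
  refine h1.trans (h2.trans ?_)
  simp

lemma cellDil_lip_left {u u' μ : ℝ} (hμ : 0 < μ) :
    |cellDil u μ - cellDil u' μ| ≤ |u - u'| / (2 * μ) := by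
  refine (clip_lip _ _).trans (le_of_eq ?_)
  rw [← abs_of_pos (show 0 < 2 * μ by positivity), ← abs_div,
    abs_of_pos (show 0 < 2 * μ by positivity)]
  congr 1; ring

lemma cellDil_lip_right_aux {u μ μ' : ℝ} (hμ : 0 < μ) (hle : μ ≤ μ') :
    |cellDil u μ - cellDil u μ'| ≤ (μ' - μ) / (2 * μ') := by
  have hμ' : 0 < μ' := hμ.trans_le hle
  have hpos : 0 ≤ (μ' - μ) / (2 * μ') := div_nonneg (by linarith) (by positivity)
  rcases le_total μ' (u - 1 / 2) with h | h
  · rw [cellDil_eq_one hμ' h, cellDil_eq_one hμ (hle.trans h)]; simpa using hpos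
  rcases le_total (u - 1 / 2) (-μ') with h' | h'
  · rw [cellDil_eq_zero hμ' h', cellDil_eq_zero hμ (h'.trans (by linarith))]; simpa using hpos
  rw [cellDil_eq_mid hμ' h' h]
  rcases le_total μ (u - 1 / 2) with g | g
  · rw [cellDil_eq_one hμ g, abs_of_nonneg]
    · rw [le_div_iff₀ (by positivity)]
      have : (u - 1 / 2) / (2 * μ') * (2 * μ') = u - 1 / 2 := by field_simp
      nlinarith
    · have : (u - 1 / 2) / (2 * μ') ≤ 1 / 2 := by
        rw [div_le_iff₀ (by positivity)]; linarith
      linarith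
  rcases le_total (u - 1 / 2) (-μ) with g' | g'
  · rw [cellDil_eq_zero hμ g', abs_of_nonpos]
    · rw [le_div_iff₀ (by positivity)]
      have : (u - 1 / 2) / (2 * μ') * (2 * μ') = u - 1 / 2 := by field_simp
      nlinarith
    · have : -1 / 2 ≤ (u - 1 / 2) / (2 * μ') := by
        rw [le_div_iff₀ (by positivity)]; linarith
      linarith
  rw [cellDil_eq_mid hμ g' g]
  have e : 1 / 2 + (u - 1 / 2) / (2 * μ) - (1 / 2 + (u - 1 / 2) / (2 * μ'))
      = ((u - 1 / 2) / μ) * ((μ' - μ) / (2 * μ')) := by field_simp; ring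
  rw [e, abs_mul, abs_of_nonneg hpos]
  have : |(u - 1 / 2) / μ| ≤ 1 := by
    rw [abs_div, abs_of_pos hμ, div_le_one hμ, abs_le]; exact ⟨g', g⟩
  nlinarith

lemma cellDil_lip_right {u μ μ' ρ : ℝ} (hρ : 0 < ρ) (h : ρ ≤ μ) (h' : ρ ≤ μ') :
    |cellDil u μ - cellDil u μ'| ≤ |μ - μ'| / (2 * ρ) := by
  rcases le_total μ μ' with g | g
  · refine (cellDil_lip_right_aux (hρ.trans_le h) g).trans ?_
    rw [abs_sub_comm, abs_of_nonneg (by linarith)]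
    exact div_le_div_of_nonneg_left (by linarith) (by positivity) (by linarith)
  · rw [abs_sub_comm]
    refine (cellDil_lip_right_aux (hρ.trans_le h') g).trans ?_
    rw [abs_of_nonneg (by linarith)]
    exact div_le_div_of_nonneg_left (by linarith) (by positivity) (by linarith)

lemma cellDil_lip {u u' μ μ' ρ : ℝ} (hρ : 0 < ρ) (h : ρ ≤ μ) (h' : ρ ≤ μ') :
    |cellDil u μ - cellDil u' μ'| ≤ (|u - u'| + |μ - μ'|) / (2 * ρ) := by
  have h1 := cellDil_lip_left (u := u) (u' := u') (hρ.trans_le h)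
  have h2 := cellDil_lip_right (u := u') hρ h h'
  have h3 : |u - u'| / (2 * μ) ≤ |u - u'| / (2 * ρ) :=
    div_le_div_of_nonneg_left (abs_nonneg _) (by positivity) (by linarith)
  have h4 := abs_sub_le (cellDil u μ) (cellDil u' μ) (cellDil u' μ')
  rw [add_div]; linarith

lemma cellDil_one {μ : ℝ} (hμ : 0 < μ) (h : μ ≤ 1 / 2) : cellDil 1 μ = 1 :=
  cellDil_eq_one hμ (by linarith)

lemma cellDil_zero {μ : ℝ} (hμ : 0 < μ) (h : μ ≤ 1 / 2) : cellDil 0 μ = 0 :=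
  cellDil_eq_zero hμ (by linarith)

/-- The order-preserving map `gridDil` is Lipschitz across different cells because the cell
endpoints are fixed, whatever the parameter. -/
lemma gridDil_lip_aux {t t' μ μ' ρ : ℝ} (hρ : 0 < ρ) (h : ρ ≤ μ) (h' : ρ ≤ μ') (g : μ ≤ 1 / 2)
    (g' : μ' ≤ 1 / 2) (hf : ⌊t⌋ < ⌊t'⌋) :
    |gridDil t' μ' - gridDil t μ| ≤ |t' - t| / (2 * ρ) := by
  have hμ := hρ.trans_le h
  have hμ' := hρ.trans_le h'
  have hk : (⌊t⌋ : ℝ) + 1 ≤ ⌊t'⌋ := by exact_mod_cast hf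
  have e1 := Int.floor_add_fract t
  have e2 := Int.floor_add_fract t'
  have u0 := Int.fract_nonneg t'
  have u1 := (Int.fract_lt_one t).le
  have c1 := cellDil_mem (Int.fract t) μ
  have c2 := cellDil_mem (Int.fract t') μ'
  have a1 := cellDil_lip_left (u := 1) (u' := Int.fract t) hμ
  have a2 := cellDil_lip_left (u := Int.fract t') (u' := 0) hμ'
  rw [cellDil_one hμ g, abs_of_nonneg (by linarith), abs_of_nonneg (by linarith)] at a1
  rw [cellDil_zero hμ' g', sub_zero, sub_zero, abs_of_nonneg c2.1, abs_of_nonneg u0] at a2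
  have b1 : (1 - Int.fract t) / (2 * μ) ≤ (1 - Int.fract t) / (2 * ρ) :=
    div_le_div_of_nonneg_left (by linarith) (by positivity) (by linarith)
  have b2 : Int.fract t' / (2 * μ') ≤ Int.fract t' / (2 * ρ) :=
    div_le_div_of_nonneg_left (by linarith) (by positivity) (by linarith)
  have b3 : ((⌊t'⌋ : ℝ) - ⌊t⌋ - 1) ≤ ((⌊t'⌋ : ℝ) - ⌊t⌋ - 1) / (2 * ρ) := by
    rw [le_div_iff₀ (by positivity)]; nlinarith
  have e3 : t' - t = ((⌊t'⌋ : ℝ) - ⌊t⌋ - 1) + (1 - Int.fract t) + Int.fract t' := by linarith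
  rw [abs_of_nonneg (by rw [gridDil, gridDil]; linarith), abs_of_nonneg (by linarith), e3,
    add_div, add_div, gridDil, gridDil]
  linarith

lemma gridDil_lip {t t' μ μ' ρ : ℝ} (hρ : 0 < ρ) (h : ρ ≤ μ) (h' : ρ ≤ μ') (g : μ ≤ 1 / 2)
    (g' : μ' ≤ 1 / 2) :
    |gridDil t μ - gridDil t' μ'| ≤ (|t - t'| + |μ - μ'|) / (2 * ρ) := by
  have hm : |t - t'| / (2 * ρ) ≤ (|t - t'| + |μ - μ'|) / (2 * ρ) :=
    div_le_div_of_nonneg_right (by linarith [abs_nonneg (μ - μ')]) (by positivity)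
  rcases lt_trichotomy ⌊t⌋ ⌊t'⌋ with hf | hf | hf
  · rw [abs_sub_comm]
    refine (gridDil_lip_aux hρ h h' g g' hf).trans ?_
    rwa [abs_sub_comm]
  · have e1 := Int.floor_add_fract t
    have e2 := Int.floor_add_fract t'
    have := cellDil_lip (u := Int.fract t) (u' := Int.fract t') hρ h h'
    have e3 : Int.fract t - Int.fract t' = t - t' := by
      rw [hf] at e1; linarith
    rw [e3] at this
    rw [gridDil, gridDil, hf]
    convert this using 2; ring
  · exact (gridDil_lip_aux hρ h' h g' g hf).trans hm

lemma gridDil_half (t : ℝ) : gridDil t (1 / 2) = t := by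
  rw [gridDil, cellDil_half (Int.fract_nonneg t) (Int.fract_lt_one t).le, Int.floor_add_fract]

lemma gridDil_sub_abs_le (t μ : ℝ) : |gridDil t μ - t| ≤ 1 := by
  have h1 := cellDil_mem (Int.fract t) μ
  have h2 := Int.fract_nonneg t
  have h3 := (Int.fract_lt_one t).le
  have h4 := Int.floor_add_fract t
  rw [gridDil, abs_le]; constructor <;> linarith

lemma gridDil_int {t μ : ℝ} (hμ : 0 < μ) (h : μ ≤ halfDist t) : ∃ k : ℤ, gridDil t μ = k := by
  rw [halfDist, le_abs] at h
  rcases h with h | h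
  · exact ⟨⌊t⌋ + 1, by rw [gridDil, cellDil_eq_one hμ h]; push_cast; ring⟩
  · exact ⟨⌊t⌋, by rw [gridDil, cellDil_eq_zero hμ (by linarith)]; ring⟩

lemma halfDist_int (k : ℤ) : halfDist (k : ℝ) = 1 / 2 := by
  rw [halfDist, Int.fract_intCast]; norm_num

lemma halfDist_le_gridDil {t μ : ℝ} (hμ : 0 < μ) (g : μ ≤ 1 / 2) :
    halfDist t ≤ halfDist (gridDil t μ) := by
  rcases le_total μ (halfDist t) with h | h
  · obtain ⟨k, hk⟩ := gridDil_int hμ h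
    rw [hk, halfDist_int]; exact halfDist_le_half t
  by_cases h1 : cellDil (Int.fract t) μ = 1
  · have : gridDil t μ = ((⌊t⌋ + 1 : ℤ) : ℝ) := by rw [gridDil, h1]; push_cast; ring
    rw [this, halfDist_int]; exact halfDist_le_half t
  have hc := cellDil_mem (Int.fract t) μ
  have hfr : Int.fract (gridDil t μ) = cellDil (Int.fract t) μ := by
    rw [gridDil, Int.fract_intCast_add, Int.fract_eq_self]
    exact ⟨hc.1, lt_of_le_of_ne hc.2 h1⟩
  rw [halfDist, abs_le] at h
  rw [halfDist, halfDist, hfr, cellDil_eq_mid hμ h.1 h.2, add_sub_cancel_left, abs_div,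
    abs_of_pos (show 0 < 2 * μ by positivity), le_div_iff₀ (by positivity)]
  nlinarith [abs_nonneg (Int.fract t - 1 / 2)]

/-! ### Dilations and skeleta in dimension `n` -/

/-- The `k`-th smallest among the numbers `halfDist (x i)`, i.e. the sup-norm distance of `x` to
the set of points with at least `k` half-integer coordinates. -/
def kthDist (k : ℕ) (x : EuclideanSpace ℝ (Fin n)) : ℝ :=
  if h : (Finset.powersetCard k (Finset.univ : Finset (Fin n))).Nonempty then
    (Finset.powersetCard k (Finset.univ : Finset (Fin n))).inf' h
      (fun I => ((I.sup fun i => (halfDist (x i)).toNNReal : ℝ≥0) : ℝ))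
  else 0

lemma kthDist_le_iff {k : ℕ} (hk : k ≤ n) {x : EuclideanSpace ℝ (Fin n)} {t : ℝ} (ht : 0 ≤ t) :
    kthDist k x ≤ t ↔ ∃ I : Finset (Fin n), I.card = k ∧ ∀ i ∈ I, halfDist (x i) ≤ t := by
  have h : (Finset.powersetCard k (Finset.univ : Finset (Fin n))).Nonempty := by
    rw [Finset.powersetCard_nonempty]; simpa using hk
  lift t to ℝ≥0 using ht
  rw [kthDist, dif_pos h, Finset.inf'_le_iff]
  simp only [Finset.mem_powersetCard, Finset.subset_univ, true_and, NNReal.coe_le_coe,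
    Finset.sup_le_iff, Real.toNNReal_le_iff_le_coe]

lemma kthDist_nonneg (k : ℕ) (x : EuclideanSpace ℝ (Fin n)) : 0 ≤ kthDist k x := by
  unfold kthDist
  split_ifs with h
  · simp [Finset.le_inf'_iff]
  · exact le_rfl

lemma kthDist_le_half {k : ℕ} (hk : k ≤ n) (x : EuclideanSpace ℝ (Fin n)) :
    kthDist k x ≤ 1 / 2 := by
  rw [kthDist_le_iff hk (by norm_num)]
  obtain ⟨I, -, hI⟩ := Finset.exists_subset_card_eq (s := (Finset.univ : Finset (Fin n)))
    (n := k) (by simpa using hk)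
  exact ⟨I, hI, fun i _ => halfDist_le_half _⟩

lemma exists_kthDist {k : ℕ} (hk : k ≤ n) (x : EuclideanSpace ℝ (Fin n)) :
    ∃ I : Finset (Fin n), I.card = k ∧ ∀ i ∈ I, halfDist (x i) ≤ kthDist k x :=
  (kthDist_le_iff hk (kthDist_nonneg k x)).1 le_rfl

lemma kthDist_le_of_coord {k : ℕ} (hk : k ≤ n) {x y : EuclideanSpace ℝ (Fin n)} {c : ℝ}
    (hc : 0 ≤ c) (h : ∀ i, halfDist (x i) ≤ halfDist (y i) + c) :
    kthDist k x ≤ kthDist k y + c := by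
  obtain ⟨I, hI, hI'⟩ := exists_kthDist hk y
  rw [kthDist_le_iff hk (add_nonneg (kthDist_nonneg k y) hc)]
  exact ⟨I, hI, fun i hi => (h i).trans (by linarith [hI' i hi])⟩

lemma coord_abs_le (x : EuclideanSpace ℝ (Fin n)) (i : Fin n) : |x i| ≤ ‖x‖ := by
  simpa using PiLp.norm_apply_le x i

lemma coord_dist_le (x y : EuclideanSpace ℝ (Fin n)) (i : Fin n) : |x i - y i| ≤ dist x y := by
  rw [dist_eq_norm]; simpa using coord_abs_le (x - y) i

lemma kthDist_lip {k : ℕ} (hk : k ≤ n) (x y : EuclideanSpace ℝ (Fin n)) :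
    |kthDist k x - kthDist k y| ≤ dist x y := by
  rw [abs_le]
  have h1 := kthDist_le_of_coord hk (x := x) (y := y) dist_nonneg
    (fun i => (halfDist_lip _ _).trans (add_le_add le_rfl (coord_dist_le x y i)))
  have h2 := kthDist_le_of_coord hk (x := y) (y := x) dist_nonneg
    (fun i => (halfDist_lip _ _).trans (add_le_add le_rfl (coord_dist_le y x i)))
  rw [dist_comm y x] at h2
  constructor <;> linarith

lemma continuous_kthDist {k : ℕ} (hk : k ≤ n) :
    Continuous (kthDist k : EuclideanSpace ℝ (Fin n) → ℝ) := by
  apply LipschitzWith.continuous (K := 1)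
  refine LipschitzWith.of_dist_le_mul fun x y => ?_
  rw [Real.dist_eq]; simpa using kthDist_lip hk x y

lemma kthDist_mono {k l : ℕ} (hkl : k ≤ l) (hl : l ≤ n) (x : EuclideanSpace ℝ (Fin n)) :
    kthDist k x ≤ kthDist l x := by
  obtain ⟨I, hI, hI'⟩ := exists_kthDist hl x
  obtain ⟨J, hJ, hJ'⟩ := Finset.exists_subset_card_eq (s := I) (n := k) (by omega)
  rw [kthDist_le_iff (hkl.trans hl) (kthDist_nonneg l x)]
  exact ⟨J, hJ', fun i hi => hI' i (hJ hi)⟩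

/-- At most `k - 1` coordinates of `x` are closer than `kthDist k x` to the half-integers. -/
lemma card_lt_kthDist {k : ℕ} (hk : k ≤ n) (hk0 : 0 < k) (x : EuclideanSpace ℝ (Fin n)) :
    (Finset.univ.filter fun i => halfDist (x i) < kthDist k x).card < k := by
  by_contra! hcon
  obtain ⟨J, hJ, hJ'⟩ := Finset.exists_subset_card_eq hcon
  have hne : J.Nonempty := by rw [← Finset.card_pos]; omega
  obtain ⟨i, hi, hmax⟩ := J.exists_max_image (fun i => halfDist (x i)) hne
  have h1 : kthDist k x ≤ halfDist (x i) :=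
    (kthDist_le_iff hk (halfDist_nonneg _)).2 ⟨J, hJ', hmax⟩
  have h2 := hJ hi
  simp only [Finset.mem_filter, Finset.mem_univ, true_and] at h2
  linarith

/-- The `k`-dimensional skeleton of the unit grid: points with at most `k` non-integer
coordinates. -/
def skel (n k : ℕ) : Set (EuclideanSpace ℝ (Fin n)) :=
  {z | (Finset.univ.filter fun i => ¬ ∃ m : ℤ, z i = m).card ≤ k}

/-- Coordinatewise application of `gridDil` with parameter `μ`. -/
def dil (μ : ℝ) (x : EuclideanSpace ℝ (Fin n)) : EuclideanSpace ℝ (Fin n) :=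
  WithLp.toLp 2 fun i => gridDil (x i) μ

@[simp] lemma dil_apply (μ : ℝ) (x : EuclideanSpace ℝ (Fin n)) (i : Fin n) :
    dil μ x i = gridDil (x i) μ := rfl

lemma dil_half (x : EuclideanSpace ℝ (Fin n)) : dil (1 / 2) x = x := by
  ext i; simp only [dil_apply, gridDil_half]

/-- Dilating by a parameter `μ ≤ kthDist (k+1) x` pushes `x` into the `k`-skeleton. -/
lemma dil_mem_skel {k : ℕ} (hk : k + 1 ≤ n) {x : EuclideanSpace ℝ (Fin n)} {μ : ℝ} (hμ : 0 < μ)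
    (h : μ ≤ kthDist (k + 1) x) : dil μ x ∈ skel n k := by
  have h1 := card_lt_kthDist hk (Nat.succ_pos k) x
  refine le_trans (Finset.card_le_card ?_) (Nat.lt_succ_iff.1 h1)
  intro i hi
  simp only [Finset.mem_filter, Finset.mem_univ, true_and] at hi ⊢
  by_contra! hcon
  exact hi (gridDil_int hμ (h.trans hcon))

lemma norm_le_of_coord {x : EuclideanSpace ℝ (Fin n)} {c : ℝ} (h : ∀ i, |x i| ≤ c) :
    ‖x‖ ≤ n * c := by
  rw [EuclideanSpace.norm_eq]
  rcases Nat.eq_zero_or_pos n with rfl | hn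
  · simp
  have hc : 0 ≤ c := (abs_nonneg _).trans (h ⟨0, hn⟩)
  have hn1 : (1 : ℝ) ≤ n := by exact_mod_cast hn
  apply Real.sqrt_le_iff.2 ⟨by positivity, ?_⟩
  have : ∑ i : Fin n, ‖x i‖ ^ 2 ≤ ∑ _i : Fin n, c ^ 2 := by
    refine Finset.sum_le_sum fun i _ => ?_
    exact pow_le_pow_left₀ (norm_nonneg _) (h i) 2
  refine this.trans ?_
  simp only [Finset.sum_const, Finset.card_univ, Fintype.card_fin, nsmul_eq_mul]
  nlinarith [sq_nonneg c, mul_nonneg (show (0 : ℝ) ≤ n by positivity) (sq_nonneg c)]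

lemma dist_le_of_coord {x y : EuclideanSpace ℝ (Fin n)} {c : ℝ} (h : ∀ i, |x i - y i| ≤ c) :
    dist x y ≤ n * c := by
  rw [dist_eq_norm]; exact norm_le_of_coord (by simpa using h)

lemma dist_dil_le (μ : ℝ) (x : EuclideanSpace ℝ (Fin n)) : dist (dil μ x) x ≤ n := by
  simpa using dist_le_of_coord (x := dil μ x) (y := x) (c := 1)
    fun i => gridDil_sub_abs_le _ _

/-- Dilation with a variable `1`-Lipschitz parameter bounded below by `ρ` is Lipschitz with
constant `n / ρ`. -/
lemma dil_lip {f : EuclideanSpace ℝ (Fin n) → ℝ} {S : Set (EuclideanSpace ℝ (Fin n))} {ρ : ℝ}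
    (hρ : 0 < ρ) (h1 : ∀ x ∈ S, ρ ≤ f x) (h2 : ∀ x ∈ S, f x ≤ 1 / 2)
    (hf : ∀ x ∈ S, ∀ y ∈ S, |f x - f y| ≤ dist x y) :
    LipschitzOnWith (n / ρ).toNNReal (fun x => dil (f x) x) S := by
  refine LipschitzOnWith.of_dist_le_mul fun x hx y hy => ?_
  rw [Real.coe_toNNReal _ (by positivity)]
  have : n / ρ * dist x y = n * ((dist x y + dist x y) / (2 * ρ)) := by field_simp; ring
  rw [this]
  refine dist_le_of_coord fun i => ?_
  refine (gridDil_lip hρ (h1 x hx) (h1 y hy) (h2 x hx) (h2 y hy)).trans ?_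
  exact div_le_div_of_nonneg_right
    (add_le_add (coord_dist_le x y i) (hf x hx y hy)) (by positivity)

lemma kthDist_le_dil {k : ℕ} (hk : k ≤ n) {μ : ℝ} (hμ : 0 < μ) (g : μ ≤ 1 / 2)
    (x : EuclideanSpace ℝ (Fin n)) : kthDist k x ≤ kthDist k (dil μ x) := by
  simpa using kthDist_le_of_coord hk (x := x) (y := dil μ x) le_rfl
    (fun i => by simpa using halfDist_le_gridDil hμ g)

/-! ### The two deformations of a ball -/

/-- Cut-off equal to `0` on `closedBall b (R - n - 1)` and to `1/2` outside
`ball b (R - n - 1/2)`. -/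
def cutoff (b : EuclideanSpace ℝ (Fin n)) (R : ℝ) (x : EuclideanSpace ℝ (Fin n)) : ℝ :=
  max 0 (min (1 / 2) (dist x b - (R - (n + 1))))

/-- Parameter of the first deformation: `kthDist (d + 1)` well inside the ball, `1/2` near its
boundary and outside. -/
def outerPar (d : ℕ) (b : EuclideanSpace ℝ (Fin n)) (R : ℝ) (x : EuclideanSpace ℝ (Fin n)) : ℝ :=
  max (kthDist (d + 1) x) (cutoff b R x)

/-- The first deformation: it pushes the inside of `closedBall b R` to the `d`-skeleton of the
unit grid and is the identity outside. -/
def outerDef (d : ℕ) (b : EuclideanSpace ℝ (Fin n)) (R : ℝ) (x : EuclideanSpace ℝ (Fin n)) :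
    EuclideanSpace ℝ (Fin n) := dil (outerPar d b R x) x

/-- The lower corner of the unit cell containing `z`. -/
def floorVec (z : EuclideanSpace ℝ (Fin n)) : EuclideanSpace ℝ (Fin n) :=
  WithLp.toLp 2 fun i => (⌊z i⌋ : ℝ)

/-- Parameter of the second deformation. It depends on the open face of the `d`-skeleton
containing `z`: the faces near the centre of the ball are pushed to their boundaries, the others
are left fixed. -/
def innerPar (d : ℕ) (b : EuclideanSpace ℝ (Fin n)) (R : ℝ) (z : EuclideanSpace ℝ (Fin n)) : ℝ :=
  if dist (floorVec z) b ≤ R - (4 * n + 1) then kthDist d z else 1 / 2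

/-- The second deformation: radial projection of each `d`-face near the centre of the ball to its
boundary. -/
def innerDef (d : ℕ) (b : EuclideanSpace ℝ (Fin n)) (R : ℝ) (z : EuclideanSpace ℝ (Fin n)) :
    EuclideanSpace ℝ (Fin n) := dil (innerPar d b R z) z

lemma cutoff_nonneg (b : EuclideanSpace ℝ (Fin n)) (R : ℝ) (x : EuclideanSpace ℝ (Fin n)) :
    0 ≤ cutoff b R x := le_max_left _ _

lemma cutoff_le (b : EuclideanSpace ℝ (Fin n)) (R : ℝ) (x : EuclideanSpace ℝ (Fin n)) :
    cutoff b R x ≤ 1 / 2 := max_le (by norm_num) (min_le_left _ _)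

lemma cutoff_eq_half {b : EuclideanSpace ℝ (Fin n)} {R : ℝ} {x : EuclideanSpace ℝ (Fin n)}
    (h : R - n ≤ dist x b) : cutoff b R x = 1 / 2 := by
  rw [cutoff, min_eq_left (by linarith), max_eq_right (by norm_num)]

lemma cutoff_eq_zero {b : EuclideanSpace ℝ (Fin n)} {R : ℝ} {x : EuclideanSpace ℝ (Fin n)}
    (h : dist x b ≤ R - (n + 1)) : cutoff b R x = 0 := by
  rw [cutoff, max_eq_left]
  exact (min_le_right _ _).trans (by linarith)

lemma cutoff_lip (b : EuclideanSpace ℝ (Fin n)) (R : ℝ) (x y : EuclideanSpace ℝ (Fin n)) :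
    |cutoff b R x - cutoff b R y| ≤ dist x y := by
  have h1 := abs_max_sub_max_le_abs (min (1 / 2) (dist x b - (R - (n + 1))))
    (min (1 / 2) (dist y b - (R - (n + 1)))) 0
  have h2 := abs_min_sub_min_le_max (1 / 2) (dist x b - (R - (n + 1))) (1 / 2)
    (dist y b - (R - (n + 1)))
  rw [cutoff, cutoff, max_comm 0, max_comm 0]
  refine h1.trans (h2.trans (max_le (by simp [dist_nonneg]) ?_))
  rw [sub_sub_sub_cancel_right]
  exact abs_dist_sub_le x y b

lemma outerPar_lip {d : ℕ} (hdn : d < n) (b : EuclideanSpace ℝ (Fin n)) (R : ℝ)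
    (x y : EuclideanSpace ℝ (Fin n)) :
    |outerPar d b R x - outerPar d b R y| ≤ dist x y := by
  refine (abs_max_sub_max_le_max _ _ _ _).trans (max_le (kthDist_lip hdn x y) (cutoff_lip b R x y))

lemma outerPar_le {d : ℕ} (hdn : d < n) (b : EuclideanSpace ℝ (Fin n)) (R : ℝ)
    (x : EuclideanSpace ℝ (Fin n)) : outerPar d b R x ≤ 1 / 2 :=
  max_le (kthDist_le_half hdn x) (cutoff_le b R x)

lemma outerDef_eq_self {d : ℕ} (hdn : d < n) {b : EuclideanSpace ℝ (Fin n)} {R : ℝ}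
    {x : EuclideanSpace ℝ (Fin n)} (h : R - n ≤ dist x b) : outerDef d b R x = x := by
  have : outerPar d b R x = 1 / 2 := by
    rw [outerPar, cutoff_eq_half h]; exact max_eq_right (kthDist_le_half hdn x)
  rw [outerDef, this, dil_half]

lemma outerDef_mem_ball {d : ℕ} (hdn : d < n) {b : EuclideanSpace ℝ (Fin n)} {R : ℝ}
    {x : EuclideanSpace ℝ (Fin n)} (h : x ∈ closedBall b R) :
    outerDef d b R x ∈ closedBall b R := by
  rcases le_total (R - n) (dist x b) with g | g
  · rwa [outerDef_eq_self hdn g]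
  · have h1 := dist_triangle (outerDef d b R x) x b
    have h2 := dist_dil_le (outerPar d b R x) x
    rw [← outerDef] at h2
    rw [mem_closedBall]; linarith

lemma outerDef_mem_skel {d : ℕ} (hdn : d < n) {b : EuclideanSpace ℝ (Fin n)} {R : ℝ}
    {x : EuclideanSpace ℝ (Fin n)} (hx : 0 < kthDist (d + 1) x) (h : dist x b ≤ R - (n + 1)) :
    outerDef d b R x ∈ skel n d := by
  have : outerPar d b R x = kthDist (d + 1) x := by
    rw [outerPar, cutoff_eq_zero h]; exact max_eq_left hx.le
  rw [outerDef, this]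
  exact dil_mem_skel hdn hx le_rfl

lemma le_outerPar {d : ℕ} {b : EuclideanSpace ℝ (Fin n)} {R ρ : ℝ}
    {E : Set (EuclideanSpace ℝ (Fin n))} (hρ' : ρ ≤ 1 / 2)
    (hE : ∀ x ∈ E, x ∈ closedBall b R → ρ ≤ kthDist (d + 1) x) {x : EuclideanSpace ℝ (Fin n)}
    (hx : x ∈ E) : ρ ≤ outerPar d b R x := by
  by_cases h : x ∈ closedBall b R
  · exact (hE x hx h).trans (le_max_left _ _)
  · rw [mem_closedBall, not_le] at h
    have : R - n ≤ dist x b := by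
      have : (0 : ℝ) ≤ n := by positivity
      linarith
    exact hρ'.trans ((cutoff_eq_half this).ge.trans (le_max_right _ _))

lemma outerDef_lip {d : ℕ} (hdn : d < n) {b : EuclideanSpace ℝ (Fin n)} {R ρ : ℝ}
    {E : Set (EuclideanSpace ℝ (Fin n))} (hρ : 0 < ρ) (hρ' : ρ ≤ 1 / 2)
    (hE : ∀ x ∈ E, x ∈ closedBall b R → ρ ≤ kthDist (d + 1) x) :
    LipschitzOnWith (n / ρ).toNNReal (outerDef d b R) E :=
  dil_lip hρ (fun _ hx => le_outerPar hρ' hE hx) (fun x _ => outerPar_le hdn b R x)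
    (fun x _ y _ => outerPar_lip hdn b R x y)

lemma dist_floorVec_le (z : EuclideanSpace ℝ (Fin n)) : dist (floorVec z) z ≤ n := by
  simpa using dist_le_of_coord (x := floorVec z) (y := z) (c := 1) fun i => by
    have h2 := Int.fract_nonneg (z i)
    have h3 := (Int.fract_lt_one (z i)).le
    have h4 := Int.floor_add_fract (z i)
    change |(⌊z i⌋ : ℝ) - z i| ≤ 1
    rw [abs_le]; constructor <;> linarith

/-- Two points of the `d`-skeleton which are closer than the distance of the first one to the
boundary of its face lie in the same open face. -/
lemma floorVec_eq {d : ℕ} (hdn : d < n) {z y : EuclideanSpace ℝ (Fin n)}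
    (hz : z ∈ skel n d) (hy : y ∈ skel n d) (h : dist z y < 1 / 2 - kthDist d z) :
    floorVec z = floorVec y := by
  obtain ⟨I, hI, hI'⟩ := exists_kthDist hdn.le z
  have hk0 := kthDist_nonneg d z
  have hc : ∀ i, |z i - y i| < 1 / 2 - kthDist d z := fun i => (coord_dist_le z y i).trans_lt h
  -- the coordinates in `I` stay in the same open unit interval
  have key : ∀ i ∈ I, ⌊z i⌋ = ⌊y i⌋ ∧ 0 < Int.fract (z i) ∧ 0 < Int.fract (y i) := by
    intro i hi
    have h1 := hI' i hi
    have h2 := abs_lt.1 (hc i)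
    rw [halfDist, abs_le] at h1
    have e := Int.floor_add_fract (z i)
    have hfl : ⌊y i⌋ = ⌊z i⌋ := by
      rw [Int.floor_eq_iff]; constructor <;> linarith
    refine ⟨hfl.symm, by linarith, ?_⟩
    have e' := Int.floor_add_fract (y i)
    rw [hfl] at e'; linarith
  have notint : ∀ t : ℝ, 0 < Int.fract t → ¬ ∃ m : ℤ, t = m := by
    rintro t ht ⟨m, rfl⟩
    simp at ht
  have full : ∀ u : EuclideanSpace ℝ (Fin n), u ∈ skel n d → (∀ i ∈ I, 0 < Int.fract (u i)) →
      ∀ j ∉ I, ∃ m : ℤ, u j = m := by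
    intro u hu hu' j hj
    by_contra hcon
    have : insert j I ⊆ Finset.univ.filter fun i => ¬ ∃ m : ℤ, u i = m := by
      intro i hi
      rw [Finset.mem_filter]
      refine ⟨Finset.mem_univ _, ?_⟩
      rcases Finset.mem_insert.1 hi with rfl | hi
      · exact hcon
      · exact notint _ (hu' i hi)
    have h3 := (Finset.card_le_card this).trans hu
    rw [Finset.card_insert_of_notMem hj] at h3
    omega
  ext j
  change (⌊z j⌋ : ℝ) = ⌊y j⌋
  by_cases hj : j ∈ I
  · rw [(key j hj).1]
  · obtain ⟨p, hp⟩ := full z hz (fun i hi => (key i hi).2.1) j hj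
    obtain ⟨q, hq⟩ := full y hy (fun i hi => (key i hi).2.2) j hj
    have h2 := hc j
    rw [hp, hq] at h2 ⊢
    have h3 : |((p - q : ℤ) : ℝ)| < 1 := by push_cast; linarith
    rw [← Int.cast_abs] at h3
    have h4 : |p - q| < 1 := by exact_mod_cast h3
    have : p = q := by rw [Int.abs_lt_one_iff] at h4; omega
    rw [this]

lemma innerPar_le {d : ℕ} (hdn : d < n) (b : EuclideanSpace ℝ (Fin n)) (R : ℝ)
    (z : EuclideanSpace ℝ (Fin n)) : innerPar d b R z ≤ 1 / 2 := by
  unfold innerPar; split_ifs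
  · exact kthDist_le_half hdn.le z
  · exact le_rfl

lemma innerPar_lip_aux {d : ℕ} (hdn : d < n) {b : EuclideanSpace ℝ (Fin n)} {R : ℝ}
    {T : Set (EuclideanSpace ℝ (Fin n))}
    (hT : ∀ z ∈ T, dist z b ≤ R - (2 * n + 1) → z ∈ skel n d)
    {z y : EuclideanSpace ℝ (Fin n)} (hz : z ∈ T) (hy : y ∈ T) :
    innerPar d b R y - innerPar d b R z ≤ dist z y := by
  have h0 := dist_nonneg (x := z) (y := y)
  have hy2 := innerPar_le hdn b R y
  by_cases h : dist (floorVec z) b ≤ R - (4 * n + 1)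
  · have e : innerPar d b R z = kthDist d z := if_pos h
    by_contra! hcon
    have hlt : dist z y < 1 / 2 - kthDist d z := by linarith
    have hzb : dist z b ≤ R - (3 * n + 1) := by
      have h1 := dist_triangle z (floorVec z) b
      have h2 := dist_floorVec_le z
      rw [dist_comm] at h2; linarith
    have hn1 : (1 : ℝ) ≤ n := by exact_mod_cast (by omega : 1 ≤ n)
    have hyb : dist y b ≤ R - (2 * n + 1) := by
      have h1 := dist_triangle y z b
      have := kthDist_nonneg d z
      rw [dist_comm y z] at h1; linarith
    have hfl := floorVec_eq hdn (hT z hz (by linarith)) (hT y hy hyb) hlt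
    have e' : innerPar d b R y = kthDist d y := if_pos (hfl ▸ h)
    have := abs_le.1 (kthDist_lip hdn.le z y)
    linarith
  · have e : innerPar d b R z = 1 / 2 := if_neg h
    linarith

lemma innerPar_lip {d : ℕ} (hdn : d < n) {b : EuclideanSpace ℝ (Fin n)} {R : ℝ}
    {T : Set (EuclideanSpace ℝ (Fin n))}
    (hT : ∀ z ∈ T, dist z b ≤ R - (2 * n + 1) → z ∈ skel n d)
    {z y : EuclideanSpace ℝ (Fin n)} (hz : z ∈ T) (hy : y ∈ T) :
    |innerPar d b R z - innerPar d b R y| ≤ dist z y := by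
  have h1 := innerPar_lip_aux hdn hT hz hy
  have h2 := innerPar_lip_aux hdn hT hy hz
  rw [dist_comm] at h2
  rw [abs_le]; constructor <;> linarith

lemma innerDef_eq_self {d : ℕ} {b : EuclideanSpace ℝ (Fin n)} {R : ℝ}
    {z : EuclideanSpace ℝ (Fin n)} (h : R - (3 * n + 1) < dist z b) : innerDef d b R z = z := by
  have : ¬ dist (floorVec z) b ≤ R - (4 * n + 1) := by
    intro h'
    have h1 := dist_triangle z (floorVec z) b
    have h2 := dist_floorVec_le z
    rw [dist_comm] at h2; linarith
  rw [innerDef, innerPar, if_neg this, dil_half]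

lemma innerDef_mem_ball {d : ℕ} {b : EuclideanSpace ℝ (Fin n)} {R : ℝ}
    {z : EuclideanSpace ℝ (Fin n)} (h : z ∈ closedBall b R) :
    innerDef d b R z ∈ closedBall b R := by
  rcases lt_or_ge (R - (3 * n + 1)) (dist z b) with g | g
  · rwa [innerDef_eq_self g]
  · have h1 := dist_triangle (innerDef d b R z) z b
    have h2 := dist_dil_le (innerPar d b R z) z
    have hn1 : (0 : ℝ) ≤ n := by positivity
    rw [← innerDef] at h2
    rw [mem_closedBall]; linarith

/-- The second deformation either fixes a point or sends it to the `(d-1)`-skeleton. -/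
lemma innerDef_cases {d : ℕ} (hd : 0 < d) (hdn : d < n) {b : EuclideanSpace ℝ (Fin n)} {R : ℝ}
    {z : EuclideanSpace ℝ (Fin n)} (hz : 0 < kthDist d z) :
    (innerDef d b R z ∈ skel n (d - 1)) ∨
      (R - (5 * n + 1) < dist z b ∧ innerDef d b R z = z) := by
  by_cases h : dist (floorVec z) b ≤ R - (4 * n + 1)
  · left
    have e : innerPar d b R z = kthDist d z := if_pos h
    obtain ⟨k, rfl⟩ : ∃ k, d = k + 1 := ⟨d - 1, by omega⟩
    rw [innerDef, e]
    exact dil_mem_skel hdn.le hz le_rfl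
  · right
    refine ⟨?_, by rw [innerDef, innerPar, if_neg h, dil_half]⟩
    have h1 := dist_triangle (floorVec z) z b
    have h2 := dist_floorVec_le z
    push Not at h
    linarith

lemma innerDef_lip {d : ℕ} (hdn : d < n) {b : EuclideanSpace ℝ (Fin n)} {R ρ : ℝ}
    {T : Set (EuclideanSpace ℝ (Fin n))} (hρ : 0 < ρ) (hρ' : ρ ≤ 1 / 2)
    (hT : ∀ z ∈ T, dist z b ≤ R - (2 * n + 1) → z ∈ skel n d)
    (hT' : ∀ z ∈ T, dist z b ≤ R - (3 * n + 1) → ρ ≤ kthDist d z) :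
    LipschitzOnWith (n / ρ).toNNReal (innerDef d b R) T := by
  refine dil_lip hρ (fun z hz => ?_) (fun x _ => innerPar_le hdn b R x)
    (fun x hx y hy => innerPar_lip hdn hT hx hy)
  unfold innerPar
  split_ifs with h
  · apply hT' z hz
    have h1 := dist_triangle z (floorVec z) b
    have h2 := dist_floorVec_le z
    rw [dist_comm] at h2; linarith
  · exact hρ'

/-- The composition of the two deformations, for a set avoiding the points with `d` half-integer
coordinates. -/
lemma comp_deformation {d : ℕ} (hd : 0 < d) (hdn : d < n) {b : EuclideanSpace ℝ (Fin n)} {R ρ : ℝ}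
    {E : Set (EuclideanSpace ℝ (Fin n))} (hρ : 0 < ρ) (hρ' : ρ ≤ 1 / 2)
    (hE : ∀ x ∈ E, x ∈ closedBall b R → ρ ≤ kthDist d x) :
    (∃ K : ℝ≥0, LipschitzOnWith K (innerDef d b R ∘ outerDef d b R) E) ∧
    (∀ x ∉ closedBall b R, innerDef d b R (outerDef d b R x) = x) ∧
    (∀ x ∈ closedBall b R, innerDef d b R (outerDef d b R x) ∈ closedBall b R) ∧
    ∀ x ∈ E ∩ closedBall b R, innerDef d b R (outerDef d b R x) ∈ skel n (d - 1) ∨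
      (R - (6 * n + 1) < dist x b ∧ innerDef d b R (outerDef d b R x) = outerDef d b R x) := by
  have hn0 : (0 : ℝ) ≤ n := by positivity
  have hE1 : ∀ x ∈ E, x ∈ closedBall b R → ρ ≤ kthDist (d + 1) x := fun x hx hx' =>
    (hE x hx hx').trans (kthDist_mono (Nat.le_succ d) hdn x)
  have hdx : ∀ x, dist (outerDef d b R x) x ≤ n := fun x => dist_dil_le _ x
  have hback : ∀ x, ∀ c : ℝ, dist (outerDef d b R x) b ≤ c → dist x b ≤ c + n := by
    intro x c hc
    have h1 := dist_triangle x (outerDef d b R x) b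
    have h2 := hdx x
    rw [dist_comm] at h2; linarith
  have hge : ∀ x ∈ E, x ∈ closedBall b R → ρ ≤ kthDist d (outerDef d b R x) := fun x hx hx' =>
    (hE x hx hx').trans (kthDist_le_dil hdn.le (hρ.trans_le (le_outerPar hρ' hE1 hx))
      (outerPar_le hdn b R x) x)
  refine ⟨?_, ?_, fun x hx => innerDef_mem_ball (outerDef_mem_ball hdn hx), ?_⟩
  · refine ⟨_, (innerDef_lip (T := outerDef d b R '' E) hdn hρ hρ' ?_ ?_).comp
      (outerDef_lip hdn hρ hρ' hE1) (mapsTo_image _ _)⟩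
    · rintro _ ⟨x, hx, rfl⟩ hz
      have hxb := hback x _ hz
      exact outerDef_mem_skel hdn (hρ.trans_le (hE1 x hx (by rw [mem_closedBall]; linarith)))
        (by linarith)
    · rintro _ ⟨x, hx, rfl⟩ hz
      have hxb := hback x _ hz
      exact hge x hx (by rw [mem_closedBall]; linarith)
  · intro x hx
    rw [mem_closedBall, not_le] at hx
    rw [outerDef_eq_self hdn (by linarith), innerDef_eq_self (by linarith)]
  · rintro x ⟨hx, hx'⟩
    rcases innerDef_cases (R := R) (b := b) hd hdn (hρ.trans_le (hge x hx hx')) with h | ⟨h1, h2⟩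
    · exact Or.inl h
    · refine Or.inr ⟨?_, h2⟩
      have h3 := dist_triangle (outerDef d b R x) x b
      have := hdx x
      linarith

/-- The mass of the image under the first deformation, estimated by decomposing dyadically with
respect to the distance to the singular set. -/
lemma measure_outerDef_le {d : ℕ} (hdn : d < n) (b : EuclideanSpace ℝ (Fin n)) (R : ℝ)
    {A : Set (EuclideanSpace ℝ (Fin n))} (hA : ∀ x ∈ A, 0 < kthDist (d + 1) x) :
    μH[(d:ℝ)] (outerDef d b R '' A) ≤
      ∑' j : ℕ, ENNReal.ofReal ((n * 2 ^ (j + 1)) ^ d) *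
        μH[(d:ℝ)] (A ∩ {x | kthDist (d + 1) x ≤ (1 / 2) ^ j}) := by
  have hcov : outerDef d b R '' A ⊆ ⋃ j : ℕ, outerDef d b R ''
      (A ∩ {x | kthDist (d + 1) x ≤ (1 / 2) ^ j ∧ (1 / 2) ^ (j + 1) < kthDist (d + 1) x}) := by
    rintro _ ⟨x, hx, rfl⟩
    have hle := kthDist_le_half hdn x
    obtain ⟨j, h1, h2⟩ := exists_nat_pow_near_of_lt_one (hA x hx) (hle.trans (by norm_num))
      (show (0 : ℝ) < 1 / 2 by norm_num) (by norm_num)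
    exact mem_iUnion.2 ⟨j, x, ⟨hx, h2, h1⟩, rfl⟩
  refine (measure_mono hcov).trans ((measure_iUnion_le _).trans (ENNReal.tsum_le_tsum fun j => ?_))
  have hlip : LipschitzOnWith (n / (1 / 2) ^ (j + 1) : ℝ).toNNReal (outerDef d b R)
      (A ∩ {x | kthDist (d + 1) x ≤ (1 / 2) ^ j ∧ (1 / 2) ^ (j + 1) < kthDist (d + 1) x}) := by
    refine dil_lip (by positivity) (fun x hx => hx.2.2.le.trans (le_max_left _ _))
      (fun x _ => outerPar_le hdn b R x) (fun x _ y _ => outerPar_lip hdn b R x y)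
  refine (hlip.hausdorffMeasure_image_le (Nat.cast_nonneg d)).trans ?_
  refine mul_le_mul' (le_of_eq ?_) (measure_mono (inter_subset_inter_right _ fun x hx => hx.1))
  rw [ENNReal.rpow_natCast, ENNReal.ofReal_pow (by positivity)]
  congr 1
  rw [ENNReal.ofReal]
  congr 3
  rw [one_div, inv_pow, div_inv_eq_mul]

/-! ### Measure of the skeleta -/

/-- Parametrization of the `I`-directional grid plane through the integer point `k`. -/
def faceMap (I : Finset (Fin n)) (k : Fin n → ℤ) (u : I → ℝ) : EuclideanSpace ℝ (Fin n) :=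
  WithLp.toLp 2 fun i => if h : i ∈ I then k i + u ⟨i, h⟩ else k i

lemma faceMap_lip (I : Finset (Fin n)) (k : Fin n → ℤ) :
    LipschitzWith (n : ℝ≥0) (faceMap I k) := by
  refine LipschitzWith.of_dist_le_mul fun u v => ?_
  rw [NNReal.coe_natCast]
  refine dist_le_of_coord fun i => ?_
  by_cases h : i ∈ I
  · simp only [faceMap, h, dite_true, add_sub_add_left_eq_sub]
    rw [← Real.dist_eq]; exact dist_le_pi_dist u v _
  · simp [faceMap, h]

lemma mem_face {k : ℕ} (hk : k ≤ n) {z : EuclideanSpace ℝ (Fin n)} (hz : z ∈ skel n k) :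
    ∃ I ∈ Finset.powersetCard k (Finset.univ : Finset (Fin n)),
      ∃ u ∈ Set.pi univ (fun _ : I => Icc (0 : ℝ) 1), faceMap I (fun i => ⌊z i⌋) u = z := by
  obtain ⟨I, hI, hI'⟩ := Finset.exists_superset_card_eq (s := Finset.univ.filter
    fun i => ¬ ∃ m : ℤ, z i = m) (n := k) hz (by simpa using hk)
  refine ⟨I, by simp [hI'], fun i => Int.fract (z i), fun i _ =>
    ⟨Int.fract_nonneg _, (Int.fract_lt_one _).le⟩, ?_⟩
  ext i
  by_cases h : i ∈ I
  · simp [faceMap, h, Int.floor_add_fract]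
  · have : ∃ m : ℤ, z i = m := by
      by_contra hcon
      exact h (hI (by simpa using hcon))
    obtain ⟨m, hm⟩ := this
    simp [faceMap, h, hm]

lemma measure_face_le {d : ℕ} {I : Finset (Fin n)} (hI : I.card = d) (k : Fin n → ℤ) :
    μH[(d:ℝ)] (faceMap I k '' Set.pi univ (fun _ : I => Icc (0 : ℝ) 1)) ≤ (n : ℝ≥0∞) ^ d := by
  refine ((faceMap_lip I k).hausdorffMeasure_image_le (Nat.cast_nonneg d) _).trans ?_
  have h1 : (μH[(d:ℝ)] : Measure (I → ℝ)) = volume := by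
    rw [← hausdorffMeasure_pi_real, Fintype.card_coe, hI]
  rw [h1, volume_pi_pi]
  simp

/-- The `d`-skeleton has polynomially bounded mass in balls. -/
lemma measure_skel_le {d : ℕ} (hdn : d < n) : ∃ C : ℝ, 0 ≤ C ∧ ∀ (b : EuclideanSpace ℝ (Fin n))
    (R : ℝ), ‖b‖ ≤ n → 1 ≤ R →
    μH[(d:ℝ)] (skel n d ∩ closedBall b R) ≤ ENNReal.ofReal (C * R ^ n) := by
  refine ⟨(n.choose d : ℝ) * (2 * n + 7) ^ n * n ^ d, by positivity, fun b R hb hR => ?_⟩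
  set K : ℤ := ⌈R⌉ + n + 1 with hK
  have hK0 : 0 ≤ K := by have := Int.ceil_nonneg (show (0 : ℝ) ≤ R by linarith); omega
  set F : Finset (Fin n → ℤ) := Fintype.piFinset fun _ => Finset.Icc (-K) K with hF
  set PI := Finset.powersetCard d (Finset.univ : Finset (Fin n)) with hPI
  have hcov : skel n d ∩ closedBall b R ⊆ ⋃ I ∈ PI, ⋃ k ∈ F,
      faceMap I k '' Set.pi univ (fun _ : I => Icc (0 : ℝ) 1) := by
    rintro z ⟨hz, hz'⟩
    obtain ⟨I, hI, u, hu, hfu⟩ := mem_face hdn.le hz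
    simp only [mem_iUnion]
    refine ⟨I, hI, fun i => ⌊z i⌋, ?_, u, hu, hfu⟩
    rw [hF, Fintype.mem_piFinset]
    intro i
    have h1 : ‖z‖ ≤ R + n := by
      have h2 : dist z b ≤ R := hz'
      rw [dist_eq_norm] at h2
      have := norm_le_norm_add_norm_sub' z b
      linarith
    have h2 := abs_le.1 ((coord_abs_le z i).trans h1)
    have h3 := Int.le_ceil R
    rw [Finset.mem_Icc]
    constructor
    · rw [Int.le_floor]; push_cast [hK]; linarith
    · have : (⌊z i⌋ : ℝ) ≤ K := by
        refine (Int.floor_le _).trans ?_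
        push_cast [hK]; linarith
      exact_mod_cast this
  have hFc : (F.card : ℝ) ≤ ((2 * n + 7) * R) ^ n := by
    rw [hF, Fintype.card_piFinset_const, Int.card_Icc]
    push_cast
    refine pow_le_pow_left₀ (by positivity) ?_ n
    have h4 : ((K + 1 - -K).toNat : ℤ) = 2 * K + 1 := by
      rw [Int.toNat_of_nonneg (by omega)]; ring
    have h5 : ((K + 1 - -K).toNat : ℝ) = 2 * K + 1 := by exact_mod_cast h4
    rw [h5, hK]
    have h6 := (Int.ceil_lt_add_one R).le
    push_cast
    nlinarith [mul_nonneg (show (0 : ℝ) ≤ n by positivity) (sub_nonneg.2 hR)]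
  refine (measure_mono hcov).trans ?_
  refine (measure_biUnion_finset_le _ _).trans ?_
  have step : ∀ I ∈ PI, μH[(d:ℝ)] (⋃ k ∈ F,
      faceMap I k '' Set.pi univ (fun _ : I => Icc (0 : ℝ) 1)) ≤ F.card * (n : ℝ≥0∞) ^ d := by
    intro I hI
    refine (measure_biUnion_finset_le _ _).trans ?_
    refine (Finset.sum_le_sum fun k _ =>
      measure_face_le (Finset.mem_powersetCard.1 hI).2 k).trans ?_
    simp
  refine (Finset.sum_le_sum step).trans ?_
  have e : ∑ i ∈ PI, (F.card * (n : ℝ≥0∞) ^ d)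
      = ENNReal.ofReal ((n.choose d : ℝ) * (F.card * (n : ℝ) ^ d)) := by
    rw [Finset.sum_const, hPI, Finset.card_powersetCard, Finset.card_univ, Fintype.card_fin,
      ENNReal.ofReal_mul (by positivity), ENNReal.ofReal_mul (by positivity),
      ENNReal.ofReal_pow (by positivity), ENNReal.ofReal_natCast, ENNReal.ofReal_natCast,
      ENNReal.ofReal_natCast, nsmul_eq_mul]
  rw [e]
  apply ENNReal.ofReal_le_ofReal
  have : (n.choose d : ℝ) * (F.card * (n : ℝ) ^ d) ≤
      (n.choose d : ℝ) * (((2 * n + 7) * R) ^ n * (n : ℝ) ^ d) := by gcongr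
  refine this.trans (le_of_eq ?_)
  rw [mul_pow]; ring

lemma measure_skel_null {d : ℕ} (hd : 0 < d) (hdn : d < n) :
    μH[(d:ℝ)] (skel n (d - 1)) = 0 := by
  have hcov : skel n (d - 1) ⊆ ⋃ I ∈ Finset.powersetCard (d - 1) (Finset.univ : Finset (Fin n)),
      ⋃ k : Fin n → ℤ, faceMap I k '' univ := by
    intro z hz
    obtain ⟨I, hI, u, -, hfu⟩ := mem_face (by omega) hz
    simp only [mem_iUnion]
    exact ⟨I, hI, _, u, trivial, hfu⟩
  refine measure_mono_null hcov ?_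
  refine (measure_biUnion_null_iff (Finset.countable_toSet _)).2 fun I hI => ?_
  replace hI := Finset.mem_coe.1 hI
  rw [measure_iUnion_null_iff]
  intro k
  refine le_antisymm ?_ (zero_le)
  refine ((faceMap_lip I k).hausdorffMeasure_image_le (Nat.cast_nonneg d) _).trans ?_
  have hc : I.card = d - 1 := by simpa using hI
  have h0 : μH[((d : ℝ≥0) : ℝ)] (univ : Set (I → ℝ)) = 0 := by
    apply hausdorffMeasure_of_dimH_lt
    rw [Real.dimH_univ_pi, Fintype.card_coe, hc]
    simp only [ENNReal.coe_natCast, Nat.cast_lt]; omega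
  rw [NNReal.coe_natCast] at h0
  rw [h0, mul_zero]

/-! ### Averaging over translations of the grid -/

/-- The half-open unit cube, the domain of the translation parameter. -/
def unitBox (n : ℕ) : Set (Fin n → ℝ) := Set.pi univ fun _ => Ico 0 1

lemma volume_unitBox : volume (unitBox n) = 1 := by
  rw [unitBox, volume_pi_pi]; simp

lemma measurableSet_unitBox : MeasurableSet (unitBox n) :=
  MeasurableSet.univ_pi fun _ => measurableSet_Ico

/-- The translations of the grid for which a given coordinate is `t`-close to a half-integer. -/
lemma volume_halfDist_le (s t : ℝ) (ht : 0 ≤ t) :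
    volume {c : ℝ | c ∈ Ico (0 : ℝ) 1 ∧ halfDist (s - c) ≤ t} ≤ ENNReal.ofReal (4 * t) := by
  have hsub : {c : ℝ | c ∈ Ico (0 : ℝ) 1 ∧ halfDist (s - c) ≤ t} ⊆
      Icc (Int.fract s - 1 / 2 - t) (Int.fract s - 1 / 2 + t) ∪
      Icc (Int.fract s + 1 / 2 - t) (Int.fract s + 1 / 2 + t) := by
    rintro c ⟨hc, hct⟩
    have hf0 := Int.fract_nonneg s
    have hf1 := Int.fract_lt_one s
    rw [halfDist, abs_le] at hct
    have e : Int.fract (s - c) = Int.fract (Int.fract s - c) := by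
      conv_lhs => rw [← Int.floor_add_fract s, add_sub_assoc, Int.fract_intCast_add]
    rw [e] at hct
    rcases le_total c (Int.fract s) with h | h
    · left
      rw [Int.fract_eq_self.2 ⟨by linarith, by linarith [hc.1]⟩] at hct
      constructor <;> linarith
    · rcases eq_or_lt_of_le h with h | h
      · left
        rw [h] at hct
        simp only [sub_self, Int.fract_zero] at hct
        constructor <;> linarith
      · right
        have : Int.fract (Int.fract s - c) = Int.fract s - c + 1 := by
          rw [Int.fract_eq_iff]
          exact ⟨by linarith [hc.2], by linarith, -1, by push_cast; ring⟩
        rw [this] at hct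
        constructor <;> linarith
  refine (measure_mono hsub).trans ((measure_union_le _ _).trans ?_)
  rw [Real.volume_Icc, Real.volume_Icc, ← ENNReal.ofReal_add (by linarith) (by linarith)]
  exact ENNReal.ofReal_le_ofReal (by linarith)

lemma volume_kthDist_le {k : ℕ} (hk : k ≤ n) (x : EuclideanSpace ℝ (Fin n)) {t : ℝ}
    (ht : 0 ≤ t) :
    volume {a : Fin n → ℝ | a ∈ unitBox n ∧ kthDist k (x - WithLp.toLp 2 a) ≤ t} ≤
      (n.choose k : ℝ≥0∞) * ENNReal.ofReal (4 * t) ^ k := by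
  set PI := Finset.powersetCard k (Finset.univ : Finset (Fin n)) with hPI
  have hcov : {a : Fin n → ℝ | a ∈ unitBox n ∧ kthDist k (x - WithLp.toLp 2 a) ≤ t} ⊆
      ⋃ I ∈ PI, Set.pi univ (fun i => if i ∈ I then
        {c : ℝ | c ∈ Ico (0 : ℝ) 1 ∧ halfDist (x i - c) ≤ t} else Ico 0 1) := by
    rintro a ⟨ha, hat⟩
    rw [kthDist_le_iff hk ht] at hat
    obtain ⟨I, hI, hI'⟩ := hat
    simp only [mem_iUnion]
    refine ⟨I, by simp [hPI, hI], fun i _ => ?_⟩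
    beta_reduce
    split_ifs with h
    · exact ⟨ha i trivial, by simpa using hI' i h⟩
    · exact ha i trivial
  refine (measure_mono hcov).trans ((measure_biUnion_finset_le _ _).trans ?_)
  have step : ∀ I ∈ PI, volume (Set.pi univ (fun i => if i ∈ I then
        {c : ℝ | c ∈ Ico (0 : ℝ) 1 ∧ halfDist (x i - c) ≤ t} else Ico 0 1)) ≤
        ENNReal.ofReal (4 * t) ^ k := by
    intro I hI
    rw [volume_pi_pi]
    have : ∀ i ∈ Finset.univ, volume (if i ∈ I then
        {c : ℝ | c ∈ Ico (0 : ℝ) 1 ∧ halfDist (x i - c) ≤ t} else Ico 0 1) ≤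
        if i ∈ I then ENNReal.ofReal (4 * t) else 1 := by
      intro i _
      split_ifs with h
      · exact volume_halfDist_le _ _ ht
      · simp
    refine (Finset.prod_le_prod' this).trans ?_
    rw [Finset.prod_ite, Finset.prod_const, Finset.prod_const_one, mul_one,
      Finset.filter_mem_eq_inter, Finset.univ_inter, (Finset.mem_powersetCard.1 hI).2]
  refine (Finset.sum_le_sum step).trans ?_
  rw [Finset.sum_const, hPI, Finset.card_powersetCard, Finset.card_univ, Fintype.card_fin,
    nsmul_eq_mul]

lemma volume_cylinder_le (I : Finset (Fin n)) (T : Set (I → ℝ)) :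
    volume {a : Fin n → ℝ | a ∈ unitBox n ∧ (fun i : I => a i) ∈ T} ≤ volume T := by
  have hmp := volume_preserving_piEquivPiSubtypeProd (fun _ : Fin n => ℝ) (fun i => i ∈ I)
  have hsub : {a : Fin n → ℝ | a ∈ unitBox n ∧ (fun i : I => a i) ∈ T} ⊆
      (MeasurableEquiv.piEquivPiSubtypeProd (fun _ : Fin n => ℝ) (fun i => i ∈ I)) ⁻¹'
        (T ×ˢ Set.pi univ (fun _ => Ico 0 1)) := by
    rintro a ⟨ha, haT⟩
    exact ⟨haT, fun i _ => ha i trivial⟩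
  refine (measure_mono hsub).trans ?_
  rw [hmp.measure_preimage_equiv]
  rw [Measure.volume_eq_prod, Measure.prod_prod, volume_pi_pi]
  simp only [Real.volume_Ico, sub_zero, ENNReal.ofReal_one, Finset.prod_const_one, mul_one]
  exact le_of_eq (by congr!)

/-- The translations of the grid for which `K` meets the set of points with `k` half-integer
coordinates: their measure is controlled by the coordinate projections of `K`. -/
lemma volume_bad_le {k : ℕ} (hk : k ≤ n) {K : Set (EuclideanSpace ℝ (Fin n))}
    (hK : MeasurableSet K) :
    volume {a : Fin n → ℝ | a ∈ unitBox n ∧ ∃ x ∈ K, kthDist k (x - WithLp.toLp 2 a) ≤ 0} ≤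
      (n.choose k : ℝ≥0∞) * μH[(k:ℝ)] K := by
  set PI := Finset.powersetCard k (Finset.univ : Finset (Fin n)) with hPI
  let Kc : (I : Finset (Fin n)) → (I → ℤ) → Set (EuclideanSpace ℝ (Fin n)) :=
    fun I c => K ∩ {x | ∀ i : I, ⌊x i - 1 / 2⌋ = c i}
  let pc : (I : Finset (Fin n)) → (I → ℤ) → EuclideanSpace ℝ (Fin n) → (I → ℝ) :=
    fun I c x i => x i - 1 / 2 - c i
  have hcov : {a : Fin n → ℝ | a ∈ unitBox n ∧ ∃ x ∈ K, kthDist k (x - WithLp.toLp 2 a) ≤ 0} ⊆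
      ⋃ I ∈ PI, ⋃ c : I → ℤ,
        {a : Fin n → ℝ | a ∈ unitBox n ∧ (fun i : I => a i) ∈ pc I c '' Kc I c} := by
    rintro a ⟨ha, x, hx, hxa⟩
    rw [kthDist_le_iff hk le_rfl] at hxa
    obtain ⟨I, hI, hI'⟩ := hxa
    have key : ∀ i : I, (⌊x i - 1 / 2⌋ : ℝ) + a i = x i - 1 / 2 := by
      intro i
      have h1 := hI' i i.2
      have h2 : Int.fract (x i - a i) = 1 / 2 := by
        have := abs_nonpos_iff.1 h1
        simp only [PiLp.sub_apply] at this
        linarith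
      have h3 := Int.floor_add_fract (x i - a i)
      have h4 := ha i trivial
      have : ⌊x i - 1 / 2⌋ = ⌊x i - a i⌋ := by
        rw [Int.floor_eq_iff]
        constructor <;> linarith [h4.1, h4.2]
      rw [this]; linarith
    simp only [mem_iUnion]
    refine ⟨I, by simp [hPI, hI], fun i => ⌊x i - 1 / 2⌋, ha, x, ⟨hx, fun i => rfl⟩, ?_⟩
    funext i
    have := key i
    simp only [pc]; linarith
  refine (measure_mono hcov).trans ((measure_biUnion_finset_le _ _).trans ?_)
  have step : ∀ I ∈ PI, volume (⋃ c : I → ℤ,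
      {a : Fin n → ℝ | a ∈ unitBox n ∧ (fun i : I => a i) ∈ pc I c '' Kc I c}) ≤
        μH[(k:ℝ)] K := by
    intro I hI
    have hIk : I.card = k := (Finset.mem_powersetCard.1 hI).2
    have hvol : (μH[(k:ℝ)] : Measure (I → ℝ)) = volume := by
      rw [← hausdorffMeasure_pi_real, Fintype.card_coe, hIk]
    have hlip : ∀ c, LipschitzWith 1 (pc I c) := by
      intro c
      refine LipschitzWith.of_dist_le_mul fun x y => ?_
      rw [NNReal.coe_one, one_mul, dist_pi_le_iff dist_nonneg]
      intro i
      rw [Real.dist_eq]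
      simpa [pc] using coord_dist_le x y i
    have h1 : ∀ c, volume {a : Fin n → ℝ | a ∈ unitBox n ∧ (fun i : I => a i) ∈ pc I c '' Kc I c}
        ≤ μH[(k:ℝ)] (Kc I c) := by
      intro c
      refine (volume_cylinder_le I _).trans ?_
      rw [← hvol]
      simpa using (hlip c).hausdorffMeasure_image_le (Nat.cast_nonneg k) (Kc I c)
    refine (measure_iUnion_le _).trans ((ENNReal.tsum_le_tsum h1).trans ?_)
    rw [← measure_iUnion]
    · exact measure_mono (iUnion_subset fun c => inter_subset_left)
    · intro c c' hcc
      refine Set.disjoint_left.2 fun x hx hx' => hcc ?_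
      funext i
      rw [← hx.2 i, hx'.2 i]
    · intro c
      refine hK.inter ?_
      have : {x : EuclideanSpace ℝ (Fin n) | ∀ i : I, ⌊x i - 1 / 2⌋ = c i} =
          ⋂ i : I, (fun x : EuclideanSpace ℝ (Fin n) => ⌊x i - 1 / 2⌋) ⁻¹' {c i} := by
        ext x; simp
      rw [this]
      refine MeasurableSet.iInter fun i => ?_
      have hm : Measurable fun x : EuclideanSpace ℝ (Fin n) => ⌊x i - 1 / 2⌋ :=
        Int.measurable_floor.comp (by fun_prop)
      exact hm (measurableSet_singleton _)
  refine (Finset.sum_le_sum step).trans ?_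
  rw [Finset.sum_const, hPI, Finset.card_powersetCard, Finset.card_univ, Fintype.card_fin,
    nsmul_eq_mul]

/-- The dyadic sum controlling the mass of the image of `A` under the first deformation. -/
def dyadicMass (d : ℕ) (A : Set (EuclideanSpace ℝ (Fin n))) (a : EuclideanSpace ℝ (Fin n)) :
    ℝ≥0∞ :=
  ∑' j : ℕ, ENNReal.ofReal ((n * 2 ^ (j + 1)) ^ d) *
    μH[(d:ℝ)] (A ∩ {x | kthDist (d + 1) (x - a) ≤ (1 / 2) ^ j})

/-- Constant in the averaging argument. -/
def avgConst (n d : ℕ) : ℝ := n.choose (d + 1) * 4 ^ (d + 1) * (2 * n) ^ d * 2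

lemma avgConst_nonneg (n d : ℕ) : 0 ≤ avgConst n d := by unfold avgConst; positivity

/-- Averaging over translations: the singular set has codimension `d + 1`, so that the `d`-th
inverse power of the distance to it is integrable. -/
lemma lintegral_dyadicMass {d : ℕ} (hdn : d < n) {A : Set (EuclideanSpace ℝ (Fin n))}
    (hfin : μH[(d:ℝ)] A ≠ ⊤) :
    (Measurable fun a : Fin n → ℝ => dyadicMass d A (WithLp.toLp 2 a)) ∧
    ∫⁻ a in unitBox n, dyadicMass d A (WithLp.toLp 2 a) ≤
      ENNReal.ofReal (avgConst n d) * μH[(d:ℝ)] A := by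
  set ν : Measure (EuclideanSpace ℝ (Fin n)) := (μH[(d:ℝ)]).restrict A with hν
  have : IsFiniteMeasure ν := ⟨by rw [hν, Measure.restrict_apply_univ]; exact hfin.lt_top⟩
  set S : ℕ → Set ((Fin n → ℝ) × EuclideanSpace ℝ (Fin n)) := fun j =>
    {p | kthDist (d + 1) (p.2 - WithLp.toLp 2 p.1) ≤ (1 / 2) ^ j} with hS
  have hSm : ∀ j, MeasurableSet (S j) := by
    intro j
    refine IsClosed.measurableSet (isClosed_le ?_ continuous_const)
    exact (continuous_kthDist hdn).comp
      (continuous_snd.sub ((PiLp.continuous_toLp 2 _).comp continuous_fst))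
  have hsec : ∀ j (a : Fin n → ℝ), μH[(d:ℝ)]
      (A ∩ {x | kthDist (d + 1) (x - WithLp.toLp 2 a) ≤ (1 / 2) ^ j}) = ν (Prod.mk a ⁻¹' S j) := by
    intro j a
    rw [hν, Measure.restrict_apply (measurable_prodMk_left (hSm j)), inter_comm]
    rfl
  have hmeas : ∀ j, Measurable fun a : Fin n → ℝ => ν (Prod.mk a ⁻¹' S j) :=
    fun j => measurable_measure_prodMk_left (hSm j)
  have heq : (fun a : Fin n → ℝ => dyadicMass d A (WithLp.toLp 2 a)) = fun a =>
      ∑' j : ℕ, ENNReal.ofReal ((n * 2 ^ (j + 1)) ^ d) * ν (Prod.mk a ⁻¹' S j) := by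
    funext a
    simp only [dyadicMass, hsec]
  refine ⟨by rw [heq]; exact Measurable.tsum fun j => (hmeas j).const_mul _, ?_⟩
  rw [heq, lintegral_tsum fun j => ((hmeas j).const_mul _).aemeasurable]
  have step : ∀ j : ℕ, ∫⁻ a in unitBox n, ENNReal.ofReal ((n * 2 ^ (j + 1)) ^ d) *
      ν (Prod.mk a ⁻¹' S j) ≤
      ENNReal.ofReal (n.choose (d + 1) * 4 ^ (d + 1) * (2 * n) ^ d) * μH[(d:ℝ)] A
        * ENNReal.ofReal ((1 / 2) ^ j) := by
    intro j
    rw [lintegral_const_mul _ (hmeas j), ← Measure.prod_apply (hSm j),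
      Measure.prod_apply_symm (hSm j)]
    have h1 : ∀ x : EuclideanSpace ℝ (Fin n), (volume.restrict (unitBox n))
        ((fun a => (a, x)) ⁻¹' S j) ≤
        ENNReal.ofReal (n.choose (d + 1) * (4 * (1 / 2) ^ j) ^ (d + 1)) := by
      intro x
      rw [Measure.restrict_apply (measurable_prodMk_right (hSm j))]
      rw [ENNReal.ofReal_mul (by positivity), ENNReal.ofReal_natCast,
        ENNReal.ofReal_pow (by positivity)]
      refine le_trans (measure_mono ?_) (volume_kthDist_le (k := d + 1) hdn x
        (t := (1 / 2) ^ j) (by positivity))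
      rintro a ⟨h1, h2⟩
      exact ⟨h2, h1⟩
    have h2 : ν univ = μH[(d:ℝ)] A := by rw [hν, Measure.restrict_apply_univ]
    calc _ ≤ ENNReal.ofReal ((n * 2 ^ (j + 1)) ^ d) * ∫⁻ _, ENNReal.ofReal
            (n.choose (d + 1) * (4 * (1 / 2) ^ j) ^ (d + 1)) ∂ν := by
          gcongr with x; exact h1 x
      _ = _ := by
          rw [lintegral_const, h2, ← mul_assoc, ← ENNReal.ofReal_mul (by positivity),
            mul_right_comm, ← ENNReal.ofReal_mul (by positivity)]
          congr 2
          have e : (2 : ℝ) ^ j * (1 / 2) ^ j = 1 := by rw [← mul_pow]; norm_num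
          calc ((n : ℝ) * 2 ^ (j + 1)) ^ d * (n.choose (d + 1) * (4 * (1 / 2) ^ j) ^ (d + 1))
              = (n.choose (d + 1) * 4 ^ (d + 1) * (2 * n) ^ d) * (1 / 2) ^ j *
                (2 ^ j * (1 / 2) ^ j) ^ d := by
                rw [pow_succ (2 : ℝ) j, mul_pow _ _ (d + 1), pow_succ ((1 / 2 : ℝ) ^ j) d]
                simp only [mul_pow]; ring
            _ = _ := by rw [e, one_pow, mul_one]
  refine (ENNReal.tsum_le_tsum step).trans ?_
  rw [ENNReal.tsum_mul_left]
  have hg : ∑' j : ℕ, ENNReal.ofReal ((1 / 2 : ℝ) ^ j) = ENNReal.ofReal 2 := by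
    rw [← ENNReal.ofReal_tsum_of_nonneg (fun j => by positivity) summable_geometric_two,
      tsum_geometric_two]
  rw [hg, mul_right_comm, ← ENNReal.ofReal_mul (by positivity)]
  rfl

/-- A translation which is good for both requirements: the singular set is avoided, and the
dyadic mass is at most twice its average. -/
lemma exists_translation {d k : ℕ} (hdn : d < n) (hk : k ≤ n)
    {K A : Set (EuclideanSpace ℝ (Fin n))} (hK : MeasurableSet K)
    (hfin : μH[(d:ℝ)] A ≠ ⊤) (hsmall : (n.choose k : ℝ≥0∞) * μH[(k:ℝ)] K ≤ 2⁻¹) :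
    ∃ a : EuclideanSpace ℝ (Fin n), ‖a‖ ≤ n ∧ (∀ x ∈ K, 0 < kthDist k (x - a)) ∧
      dyadicMass d A a ≤ ENNReal.ofReal (2 * avgConst n d) * μH[(d:ℝ)] A := by
  obtain ⟨hm, hint⟩ := lintegral_dyadicMass hdn hfin
  set bad := {a : Fin n → ℝ | a ∈ unitBox n ∧ ∃ x ∈ K, kthDist k (x - WithLp.toLp 2 a) ≤ 0}
    with hbad
  have hb : volume bad ≤ 2⁻¹ := (volume_bad_le hk hK).trans hsmall
  have hgood : (2⁻¹ : ℝ≥0∞) ≤ volume (unitBox n \ bad) := by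
    refine le_trans ?_ (le_measure_sdiff)
    rw [volume_unitBox]
    calc (2⁻¹ : ℝ≥0∞) = 1 - 2⁻¹ := by rw [ENNReal.one_sub_inv_two]
      _ ≤ _ := tsub_le_tsub_left hb _
  have hne : volume (unitBox n \ bad) ≠ 0 := fun h => by
    rw [h] at hgood; simp at hgood
  have htop : volume (unitBox n \ bad) ≠ ⊤ := ne_top_of_le_ne_top
    (by rw [volume_unitBox]; exact ENNReal.one_ne_top) (measure_mono sdiff_subset)
  obtain ⟨a, ha, hle⟩ := exists_le_setLAverage hne htop hm.aemeasurable
  refine ⟨WithLp.toLp 2 a, ?_, ?_, hle.trans ?_⟩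
  · simpa using norm_le_of_coord (x := WithLp.toLp 2 a) (c := 1) fun i => by
      have := ha.1 i trivial
      change |a i| ≤ 1
      rw [abs_le]; constructor <;> linarith [this.1, this.2]
  · intro x hx
    by_contra! hcon
    exact ha.2 ⟨ha.1, x, hx, hcon⟩
  · rw [setLAverage_eq, ENNReal.ofReal_mul (by norm_num), ENNReal.div_eq_inv_mul, mul_assoc]
    refine mul_le_mul' ?_ ((lintegral_mono_set sdiff_subset).trans hint)
    rw [ENNReal.inv_le_iff_inv_le]
    simpa using hgood

/-! ### Competitors at unit scale -/

/-- Quasiminimality of `E` in `closedBall b R` among Lipschitz competitors, with additive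
error `η`. -/
def QM (d : ℕ) (E : Set (EuclideanSpace ℝ (Fin n))) (b : EuclideanSpace ℝ (Fin n)) (R : ℝ)
    (η : ℝ≥0∞) : Prop :=
  ∀ g : EuclideanSpace ℝ (Fin n) → EuclideanSpace ℝ (Fin n),
    (∃ K : ℝ≥0, LipschitzOnWith K g E) → (∀ y ∈ E, y ∉ closedBall b R → g y = y) →
    (∀ y ∈ E ∩ closedBall b R, g y ∈ closedBall b R) →
    μH[(d:ℝ)] (E ∩ closedBall b R) ≤ μH[(d:ℝ)] (g '' (E ∩ closedBall b R)) + η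

open scoped Pointwise in
lemma measure_sim (d : ℕ) (p : EuclideanSpace ℝ (Fin n)) {δ : ℝ} (hδ : 0 < δ)
    (S : Set (EuclideanSpace ℝ (Fin n))) :
    μH[(d:ℝ)] ((fun y => p + δ • y) '' S) = ENNReal.ofReal (δ ^ d) * μH[(d:ℝ)] S := by
  have h1 : (fun y => p + δ • y) '' S = (IsometryEquiv.addLeft p) '' (δ • S) := by
    rw [← image_smul, image_image]; rfl
  rw [h1, IsometryEquiv.hausdorffMeasure_image,
    Measure.hausdorffMeasure_smul₀ (Nat.cast_nonneg d) hδ.ne', NNReal.rpow_natCast,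
    ENNReal.smul_def, smul_eq_mul, ENNReal.ofReal_pow hδ.le, ENNReal.coe_pow]
  congr 2
  rw [← enorm_eq_nnnorm, Real.enorm_of_nonneg hδ.le]

lemma measure_translate (d : ℕ) (a : EuclideanSpace ℝ (Fin n))
    (S : Set (EuclideanSpace ℝ (Fin n))) : μH[(d:ℝ)] {y | a + y ∈ S} = μH[(d:ℝ)] S :=
  (IsometryEquiv.addLeft a).hausdorffMeasure_preimage (d : ℝ) S

lemma image_sim_inter {p : EuclideanSpace ℝ (Fin n)} {δ : ℝ} (hδ : 0 < δ)
    (E : Set (EuclideanSpace ℝ (Fin n))) (b : EuclideanSpace ℝ (Fin n)) (R : ℝ) :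
    (fun y => p + δ • y) '' ({y | p + δ • y ∈ E} ∩ closedBall b R) =
      E ∩ closedBall (p + δ • b) (δ * R) := by
  have hd : ∀ y : EuclideanSpace ℝ (Fin n), dist (p + δ • y) (p + δ • b) = δ * dist y b := by
    intro y
    rw [dist_add_left, dist_smul₀, Real.norm_of_nonneg hδ.le]
  ext z
  constructor
  · rintro ⟨y, ⟨hy, hyb⟩, rfl⟩
    refine ⟨hy, ?_⟩
    rw [mem_closedBall, hd]
    exact mul_le_mul_of_nonneg_left hyb hδ.le
  · rintro ⟨hz, hzb⟩
    have e : p + δ • (δ⁻¹ • (z - p)) = z := by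
      rw [smul_smul, mul_inv_cancel₀ hδ.ne', one_smul, add_sub_cancel]
    refine ⟨δ⁻¹ • (z - p), ⟨by rw [mem_ofPred_eq, e]; exact hz, ?_⟩, e⟩
    rw [← e, mem_closedBall, hd] at hzb
    exact le_of_mul_le_mul_left hzb hδ

/-- Quasiminimality is invariant under similarities. -/
lemma QM.sim {d : ℕ} {E : Set (EuclideanSpace ℝ (Fin n))} {p b : EuclideanSpace ℝ (Fin n)}
    {δ R : ℝ} {η η' : ℝ≥0∞} (hδ : 0 < δ) (hη : η = ENNReal.ofReal (δ ^ d) * η')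
    (h : QM d E (p + δ • b) (δ * R) η) : QM d {y | p + δ • y ∈ E} b R η' := by
  rintro g ⟨K, hg⟩ hfix hmap
  have inv1 : ∀ z : EuclideanSpace ℝ (Fin n), p + δ • (δ⁻¹ • (z - p)) = z := fun z => by
    rw [smul_smul, mul_inv_cancel₀ hδ.ne', one_smul, add_sub_cancel]
  have inv2 : ∀ y : EuclideanSpace ℝ (Fin n), δ⁻¹ • (p + δ • y - p) = y := fun y => by
    rw [add_sub_cancel_left, smul_smul, inv_mul_cancel₀ hδ.ne', one_smul]
  have hd : ∀ y : EuclideanSpace ℝ (Fin n), dist (p + δ • y) (p + δ • b) = δ * dist y b := by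
    intro y
    rw [dist_add_left, dist_smul₀, Real.norm_of_nonneg hδ.le]
  have hball : ∀ y : EuclideanSpace ℝ (Fin n),
      p + δ • y ∈ closedBall (p + δ • b) (δ * R) ↔ y ∈ closedBall b R := fun y => by
    rw [mem_closedBall, mem_closedBall, hd, mul_le_mul_iff_right₀ hδ]
  have hpos : 0 < δ ^ d := by positivity
  have key := h (fun z => p + δ • g (δ⁻¹ • (z - p))) ?_ ?_ ?_
  · rw [← image_sim_inter hδ, image_image] at key
    simp only [inv2] at key
    rw [← image_image (fun y => p + δ • y) g, measure_sim d p hδ, measure_sim d p hδ, hη,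
      ← mul_add] at key
    exact (ENNReal.mul_le_mul_iff_right (by simpa using hpos) ENNReal.ofReal_ne_top).1 key
  · refine ⟨K, LipschitzOnWith.of_dist_le_mul fun z hz w hw => ?_⟩
    have h1 := hg.dist_le_mul (δ⁻¹ • (z - p)) (by rw [mem_ofPred_eq, inv1]; exact hz)
      (δ⁻¹ • (w - p)) (by rw [mem_ofPred_eq, inv1]; exact hw)
    rw [dist_smul₀, dist_sub_right, norm_inv, Real.norm_of_nonneg hδ.le] at h1
    rw [dist_add_left, dist_smul₀, Real.norm_of_nonneg hδ.le]
    calc δ * dist (g (δ⁻¹ • (z - p))) (g (δ⁻¹ • (w - p))) ≤ δ * (K * (δ⁻¹ * dist z w)) := by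
          gcongr
      _ = K * dist z w := by field_simp
  · intro z hz hzb
    rw [← inv1 z, hball] at hzb
    beta_reduce
    rw [hfix _ (by rw [mem_ofPred_eq, inv1]; exact hz) hzb, inv1]
  · rintro z ⟨hz, hzb⟩
    rw [← inv1 z, hball] at hzb
    exact (hball _).2 (hmap _ ⟨by rw [mem_ofPred_eq, inv1]; exact hz, hzb⟩)

/-- A translation for which the compact set `K` stays away from the singular set. -/
lemma exists_good_translation {d k : ℕ} (hdn : d < n) (hk : k ≤ n)
    {K A : Set (EuclideanSpace ℝ (Fin n))} (hK : IsCompact K)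
    (hfin : μH[(d:ℝ)] A ≠ ⊤) (hsmall : (n.choose k : ℝ≥0∞) * μH[(k:ℝ)] K ≤ 2⁻¹) :
    ∃ a : EuclideanSpace ℝ (Fin n), ‖a‖ ≤ n ∧
      (∃ ρ : ℝ, 0 < ρ ∧ ρ ≤ 1 / 2 ∧ ∀ x ∈ K, ρ ≤ kthDist k (x - a)) ∧
      dyadicMass d A a ≤ ENNReal.ofReal (2 * avgConst n d) * μH[(d:ℝ)] A := by
  obtain ⟨a, ha, hpos, hmass⟩ := exists_translation hdn hk hK.measurableSet hfin hsmall
  refine ⟨a, ha, ?_, hmass⟩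
  rcases K.eq_empty_or_nonempty with rfl | hne
  · exact ⟨1 / 2, by norm_num, le_rfl, by simp⟩
  · obtain ⟨x, hx, hmin⟩ := hK.exists_isMinOn hne
      (f := fun x => kthDist k (x - a)) ((continuous_kthDist hk).comp
        (continuous_id.sub continuous_const)).continuousOn
    exact ⟨kthDist k (x - a), hpos x hx, kthDist_le_half hk _, fun y hy => hmin hy⟩

/-- Mass of the image, under the first deformation, of the translate of a set `A`. -/
lemma measure_outerDef_translate_le {d : ℕ} (hdn : d < n) (a b : EuclideanSpace ℝ (Fin n)) (R : ℝ)
    {A : Set (EuclideanSpace ℝ (Fin n))} (hA : ∀ x ∈ A, 0 < kthDist (d + 1) (x - a)) :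
    μH[(d:ℝ)] (outerDef d b R '' {y | a + y ∈ A}) ≤ dyadicMass d A a := by
  refine (measure_outerDef_le hdn b R fun y hy => ?_).trans (le_of_eq ?_)
  · simpa using hA _ hy
  · unfold dyadicMass
    congr 1; funext j; congr 1
    rw [← measure_translate d a (A ∩ _)]
    congr 1; ext y; simp

/-- Unit scale competitor giving the upper bound: pushing `E` to the `d`-skeleton. -/
lemma unit_upper {d : ℕ} (hdn : d < n) : ∃ C : ℝ, 1 ≤ C ∧
    ∀ (E : Set (EuclideanSpace ℝ (Fin n))) (R : ℝ) (η : ℝ≥0∞), 1 ≤ R →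
      IsCompact (E ∩ closedBall 0 R) → μH[(d:ℝ)] (E ∩ closedBall 0 R) ≠ ⊤ → QM d E 0 R η →
      μH[(d:ℝ)] (E ∩ closedBall 0 R) ≤ ENNReal.ofReal C *
        μH[(d:ℝ)] ((E ∩ closedBall 0 R) \ closedBall 0 (R - (6 * n + 1))) +
        ENNReal.ofReal (C * R ^ n) + η := by
  obtain ⟨C₁, hC₁, hskel⟩ := measure_skel_le hdn
  have hav := avgConst_nonneg n d
  refine ⟨max 1 (max C₁ (2 * avgConst n d)), le_max_left _ _, fun E R η hR hK hfin hQM => ?_⟩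
  set C := max 1 (max C₁ (2 * avgConst n d)) with hC
  have hn0 : (0 : ℝ) ≤ n := by positivity
  have hzero : μH[((d + 1 : ℕ) : ℝ)] (E ∩ closedBall 0 R) = 0 := by
    refine (Measure.hausdorffMeasure_zero_or_top (d₁ := (d : ℝ)) (by push_cast; linarith)
      _).resolve_right hfin
  set A := (E ∩ closedBall 0 R) \ closedBall 0 (R - (6 * n + 1)) with hA
  have hAfin : μH[(d:ℝ)] A ≠ ⊤ := ne_top_of_le_ne_top hfin (measure_mono sdiff_subset)
  obtain ⟨a, ha, ⟨ρ, hρ, hρ', hρK⟩, hmass⟩ := exists_good_translation hdn (k := d + 1) hdn hK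
    hAfin (by rw [hzero]; simp)
  have hQ : QM d {y | a + (1 : ℝ) • y ∈ E} (-a) R η :=
    QM.sim (η := η) one_pos (by simp) (by simpa using hQM)
  simp only [one_smul] at hQ
  have hball : ∀ y : EuclideanSpace ℝ (Fin n), ∀ s : ℝ,
      y ∈ closedBall (-a) s ↔ a + y ∈ closedBall 0 s := fun y s => by
    rw [mem_closedBall, mem_closedBall, dist_eq_norm, dist_eq_norm, sub_neg_eq_add, sub_zero,
      add_comm]
  have hset : {y | a + y ∈ E} ∩ closedBall (-a) R = {y | a + y ∈ E ∩ closedBall 0 R} := by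
    ext y; simp only [mem_inter_iff, mem_ofPred_eq, hball]
  have hlow : ∀ y ∈ {y | a + y ∈ E}, y ∈ closedBall (-a) R → ρ ≤ kthDist (d + 1) y := by
    intro y hy hyb
    simpa using hρK (a + y) ⟨hy, (hball y R).1 hyb⟩
  have hmin := hQ (outerDef d (-a) R) ⟨_, outerDef_lip hdn hρ hρ' hlow⟩
    (fun y _ hy => outerDef_eq_self hdn (by
      rw [mem_closedBall, not_le] at hy; linarith))
    (fun y hy => outerDef_mem_ball hdn hy.2)
  have hsub : outerDef d (-a) R '' ({y | a + y ∈ E} ∩ closedBall (-a) R) ⊆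
      (skel n d ∩ closedBall (-a) R) ∪ outerDef d (-a) R '' {y | a + y ∈ A} := by
    rintro _ ⟨y, hy, rfl⟩
    by_cases h : a + y ∈ closedBall 0 (R - (6 * n + 1))
    · left
      refine ⟨outerDef_mem_skel hdn (hρ.trans_le (hlow y hy.1 hy.2)) ?_,
        outerDef_mem_ball hdn hy.2⟩
      have := (hball y _).2 h
      rw [mem_closedBall] at this
      linarith
    · right
      exact ⟨y, ⟨⟨hy.1, (hball y R).1 hy.2⟩, h⟩, rfl⟩
  rw [hset, measure_translate, ← hset] at hmin
  have hR0 : 0 ≤ R ^ n := by positivity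
  calc _ ≤ _ := hmin
    _ ≤ ENNReal.ofReal (C₁ * R ^ n) + ENNReal.ofReal (2 * avgConst n d) * μH[(d:ℝ)] A + η := by
        gcongr
        refine (measure_mono hsub).trans ((measure_union_le _ _).trans (add_le_add ?_ ?_))
        · exact hskel _ _ (by rwa [norm_neg]) hR
        · exact (measure_outerDef_translate_le hdn a (-a) R
            fun x hx => hρ.trans_le (hρK x hx.1)).trans hmass
    _ ≤ _ := by
        rw [add_comm (ENNReal.ofReal (C₁ * R ^ n))]
        gcongr
        · exact (le_max_right _ _).trans (le_max_right _ _)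
        · exact (le_max_left _ _).trans (le_max_right _ _)

/-- Unit scale competitor giving the lower bound: when the mass is small, `E` can be pushed to the
`(d - 1)`-skeleton, which is negligible. -/
lemma unit_lower {d : ℕ} (hd : 0 < d) (hdn : d < n) : ∃ C : ℝ, 1 ≤ C ∧
    ∀ (E : Set (EuclideanSpace ℝ (Fin n))) (R : ℝ) (η : ℝ≥0∞),
      IsCompact (E ∩ closedBall 0 R) →
      (n.choose d : ℝ≥0∞) * μH[(d:ℝ)] (E ∩ closedBall 0 R) ≤ 2⁻¹ → QM d E 0 R η →
      μH[(d:ℝ)] (E ∩ closedBall 0 R) ≤ ENNReal.ofReal C *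
        μH[(d:ℝ)] ((E ∩ closedBall 0 R) \ closedBall 0 (R - (6 * n + 1))) + η := by
  have hav := avgConst_nonneg n d
  refine ⟨max 1 (2 * avgConst n d), le_max_left _ _, fun E R η hK hsmall hQM => ?_⟩
  have hn0 : (0 : ℝ) ≤ n := by positivity
  have hfin : μH[(d:ℝ)] (E ∩ closedBall 0 R) ≠ ⊤ := by
    intro h
    rw [h, ENNReal.mul_top (by simpa using (Nat.choose_pos hdn.le).ne')] at hsmall
    simp at hsmall
  set A := (E ∩ closedBall 0 R) \ closedBall 0 (R - (6 * n + 1)) with hA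
  have hAfin : μH[(d:ℝ)] A ≠ ⊤ := ne_top_of_le_ne_top hfin (measure_mono sdiff_subset)
  obtain ⟨a, ha, ⟨ρ, hρ, hρ', hρK⟩, hmass⟩ := exists_good_translation hdn (k := d) hdn.le hK
    hAfin hsmall
  have hQ : QM d {y | a + (1 : ℝ) • y ∈ E} (-a) R η :=
    QM.sim (η := η) one_pos (by simp) (by simpa using hQM)
  simp only [one_smul] at hQ
  have hball : ∀ y : EuclideanSpace ℝ (Fin n), ∀ s : ℝ,
      y ∈ closedBall (-a) s ↔ a + y ∈ closedBall 0 s := fun y s => by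
    rw [mem_closedBall, mem_closedBall, dist_eq_norm, dist_eq_norm, sub_neg_eq_add, sub_zero,
      add_comm]
  have hset : {y | a + y ∈ E} ∩ closedBall (-a) R = {y | a + y ∈ E ∩ closedBall 0 R} := by
    ext y; simp only [mem_inter_iff, mem_ofPred_eq, hball]
  have hlow : ∀ y ∈ {y | a + y ∈ E}, y ∈ closedBall (-a) R → ρ ≤ kthDist d y := by
    intro y hy hyb
    simpa using hρK (a + y) ⟨hy, (hball y R).1 hyb⟩
  obtain ⟨hlip, hfix, hmap, himg⟩ := comp_deformation hd hdn hρ hρ' hlow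
  have hmin := hQ _ hlip (fun y _ hy => hfix y hy) (fun y hy => hmap y hy.2)
  have hsub : (innerDef d (-a) R ∘ outerDef d (-a) R) '' ({y | a + y ∈ E} ∩ closedBall (-a) R) ⊆
      skel n (d - 1) ∪ outerDef d (-a) R '' {y | a + y ∈ A} := by
    rintro _ ⟨y, hy, rfl⟩
    rcases himg y hy with h | ⟨h, h'⟩
    · exact Or.inl h
    · right
      refine ⟨y, ⟨⟨hy.1, (hball y R).1 hy.2⟩, fun hb => ?_⟩, h'.symm⟩
      have := (hball y _).2 hb
      rw [mem_closedBall] at this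
      linarith
  rw [hset, measure_translate, ← hset] at hmin
  refine hmin.trans ?_
  gcongr
  refine (measure_mono hsub).trans ((measure_union_le _ _).trans ?_)
  rw [measure_skel_null hd hdn, zero_add]
  refine (measure_outerDef_translate_le hdn a (-a) R fun x hx => hρ.trans_le
    ((hρK x hx.1).trans (kthDist_mono d.le_succ hdn _))).trans (hmass.trans ?_)
  gcongr
  exact le_max_right _ _

/-! ### Density lemma and decay inequalities -/

/-- A set of finite measure whose density is at most `1/2` of the normalization of the Hausdorff
measure is negligible. -/
lemma measure_zero_of_density {d : ℕ} (hd : 0 < d) {A : Set (EuclideanSpace ℝ (Fin n))}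
    (hfin : μH[(d:ℝ)] A ≠ ⊤) {ρ₀ : ℝ} (hρ₀ : 0 < ρ₀)
    (hA : ∀ y ∈ A, ∀ ρ : ℝ, 0 < ρ → ρ ≤ ρ₀ →
      μH[(d:ℝ)] (A ∩ closedBall y ρ) ≤ 2⁻¹ * ENNReal.ofReal (ρ ^ d)) :
    μH[(d:ℝ)] A = 0 := by
  have hd' : (0 : ℝ) < d := by exact_mod_cast hd
  -- each piece of a fine cover carries at most half of its contribution to the covering sum
  have piece : ∀ t : Set (EuclideanSpace ℝ (Fin n)), ediam t ≤ ENNReal.ofReal ρ₀ →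
      2 * μH[(d:ℝ)] (A ∩ t) ≤ ⨆ _ : t.Nonempty, ediam t ^ (d : ℝ) := by
    intro t ht
    rcases (A ∩ t).eq_empty_or_nonempty with h | ⟨y, hyA, hyt⟩
    · rw [h]; simp
    · rw [iSup_pos ⟨y, hyt⟩]
      have htop : ediam t ≠ ⊤ := ne_top_of_le_ne_top ENNReal.ofReal_ne_top ht
      have hsub : t ⊆ closedBall y (ediam t).toReal := by
        intro z hz
        rw [mem_closedBall, dist_edist]
        exact ENNReal.toReal_mono htop (edist_le_ediam_of_mem hz hyt)
      rcases eq_or_ne (ediam t) 0 with h0 | h0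
      · have : (A ∩ t).Subsingleton := (ediam_eq_zero_iff.1 h0).anti inter_subset_right
        have := Measure.nullSingletonClass_hausdorff (EuclideanSpace ℝ (Fin n)) hd'
        rw [Set.Subsingleton.measure_zero ‹_›]; simp
      · have hpos : 0 < (ediam t).toReal := ENNReal.toReal_pos h0 htop
        have h1 := hA y hyA _ hpos (ENNReal.toReal_le_of_le_ofReal hρ₀.le ht)
        calc 2 * μH[(d:ℝ)] (A ∩ t) ≤ 2 * (2⁻¹ * ENNReal.ofReal ((ediam t).toReal ^ d)) := by
              gcongr
              exact (measure_mono (inter_subset_inter_right _ hsub)).trans h1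
          _ = _ := by
              rw [← mul_assoc, ENNReal.mul_inv_cancel (by simp) (by simp), one_mul,
                ENNReal.ofReal_pow hpos.le, ENNReal.ofReal_toReal htop, ENNReal.rpow_natCast]
  have key : 2 * μH[(d:ℝ)] A ≤ μH[(d:ℝ)] A := by
    conv_rhs => rw [Measure.hausdorffMeasure_apply]
    refine le_trans ?_ (le_iSup₂ (ENNReal.ofReal ρ₀) (by simpa using hρ₀))
    refine le_iInf fun t => le_iInf fun hcov => le_iInf fun hdiam => ?_
    calc 2 * μH[(d:ℝ)] A ≤ 2 * ∑' i, μH[(d:ℝ)] (A ∩ t i) := by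
          gcongr
          refine le_trans (measure_mono ?_) (measure_iUnion_le _)
          rw [← inter_iUnion]
          exact subset_inter Subset.rfl hcov
      _ ≤ _ := by
          rw [← ENNReal.tsum_mul_left]
          exact ENNReal.tsum_le_tsum fun i => piece _ (hdiam i)
  rw [two_mul] at key
  by_contra h0
  exact absurd key (not_le.2 (ENNReal.lt_add_right hfin h0))

lemma QM.mono {d : ℕ} {E : Set (EuclideanSpace ℝ (Fin n))} {b : EuclideanSpace ℝ (Fin n)}
    {R : ℝ} {η η' : ℝ≥0∞} (h : QM d E b R η) (hη : η ≤ η') : QM d E b R η' :=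
  fun g h1 h2 h3 => (h g h1 h2 h3).trans (by gcongr)

/-- Lipschitz competitors are endpoints of deformations: interpolate linearly. -/
lemma QM.of_almostMinimal {d : ℕ} {U E : Set (EuclideanSpace ℝ (Fin n))} {h : ℝ → ℝ≥0∞}
    (hE : IsPlainAlmostMinimal d U h E) {x : EuclideanSpace ℝ (Fin n)} {r : ℝ} (hr : 0 < r)
    (hU : closedBall x r ⊆ U) : QM d E x r (h r * ENNReal.ofReal r ^ d) := by
  rintro g ⟨K, hg⟩ hfix hmap
  refine (hE.2.2.2 x r (fun t y => (1 - t) • y + t • g y) hr hU ?_).trans ?_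
  · refine ⟨?_, ?_, ?_, ?_, K, ?_⟩
    · have hgc : ContinuousOn (fun p : ℝ × EuclideanSpace ℝ (Fin n) => g p.2)
          (Icc (0 : ℝ) 1 ×ˢ E) := hg.continuousOn.comp continuousOn_snd fun p hp => hp.2
      have hc : Continuous fun p : ℝ × EuclideanSpace ℝ (Fin n) => (1 - p.1) • p.2 := by fun_prop
      exact hc.continuousOn.add (continuousOn_fst.smul hgc)
    · intro y _; simp
    · intro t _ y hy
      beta_reduce
      rw [hfix y hy.1 hy.2, ← add_smul]; simp
    · rintro t ht _ ⟨y, hy, rfl⟩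
      exact (convex_closedBall x r) hy.2 (hmap y hy) (by linarith [ht.2]) ht.1 (by ring)
    · simpa using hg
  · gcongr
    rintro _ ⟨⟨y, hy, rfl⟩, hyb⟩
    simp only [sub_self, zero_smul, one_smul, zero_add] at hyb ⊢
    refine mem_image_of_mem _ ⟨hy, ?_⟩
    by_contra hcon
    rw [hfix y hy hcon] at hyb
    exact hcon hyb

lemma isCompact_inter_of_almostMinimal {d : ℕ} {U E : Set (EuclideanSpace ℝ (Fin n))}
    {h : ℝ → ℝ≥0∞} (hE : IsPlainAlmostMinimal d U h E) {x : EuclideanSpace ℝ (Fin n)} {r : ℝ}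
    (hU : closedBall x r ⊆ U) : IsCompact (E ∩ closedBall x r) := by
  have : E ∩ closedBall x r = closure E ∩ closedBall x r :=
    Subset.antisymm (inter_subset_inter_left _ subset_closure)
      fun y hy => ⟨hE.2.1 ⟨hy.1, hU hy.2⟩, hy.2⟩
  rw [this]
  exact (isCompact_closedBall x r).inter_left isClosed_closure

/-- The mass of `E` in a closed ball. -/
def mass (d : ℕ) (E : Set (EuclideanSpace ℝ (Fin n))) (x : EuclideanSpace ℝ (Fin n)) (s : ℝ) : ℝ :=
  (μH[(d:ℝ)] (E ∩ closedBall x s)).toReal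

lemma measure_ne_top_of_almostMinimal {d : ℕ} {U E : Set (EuclideanSpace ℝ (Fin n))}
    {h : ℝ → ℝ≥0∞} (hE : IsPlainAlmostMinimal d U h E) (x : EuclideanSpace ℝ (Fin n)) (r : ℝ) :
    μH[(d:ℝ)] (E ∩ closedBall x r) ≠ ⊤ :=
  ne_top_of_le_ne_top (hE.2.2.1 x (r + 1)).ne
    (measure_mono (inter_subset_inter_right _ (closedBall_subset_ball (by linarith))))

lemma mass_nonneg (d : ℕ) (E : Set (EuclideanSpace ℝ (Fin n))) (x : EuclideanSpace ℝ (Fin n))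
    (s : ℝ) : 0 ≤ mass d E x s := ENNReal.toReal_nonneg

lemma mass_mono {d : ℕ} {U E : Set (EuclideanSpace ℝ (Fin n))}
    {h : ℝ → ℝ≥0∞} (hE : IsPlainAlmostMinimal d U h E) (x : EuclideanSpace ℝ (Fin n)) :
    Monotone (mass d E x) := fun _ _ hst =>
  ENNReal.toReal_mono (measure_ne_top_of_almostMinimal hE x _)
    (measure_mono (inter_subset_inter_right _ (closedBall_subset_closedBall hst)))

lemma ofReal_mass {d : ℕ} {U E : Set (EuclideanSpace ℝ (Fin n))}
    {h : ℝ → ℝ≥0∞} (hE : IsPlainAlmostMinimal d U h E) (x : EuclideanSpace ℝ (Fin n)) (s : ℝ) :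
    ENNReal.ofReal (mass d E x s) = μH[(d:ℝ)] (E ∩ closedBall x s) :=
  ENNReal.ofReal_toReal (measure_ne_top_of_almostMinimal hE x s)

/-- Rescaling by `δ⁻¹` around `x`. -/
lemma rescale {d : ℕ} {U E : Set (EuclideanSpace ℝ (Fin n))}
    {h : ℝ → ℝ≥0∞} (hE : IsPlainAlmostMinimal d U h E) {x : EuclideanSpace ℝ (Fin n)}
    {s δ e : ℝ} (hδ : 0 < δ) (hs : 0 < s) (hU : closedBall x s ⊆ U) (he0 : 0 ≤ e)
    (he : h s ≤ ENNReal.ofReal e) :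
    IsCompact ({y | x + δ • y ∈ E} ∩ closedBall 0 (s / δ)) ∧
    QM d {y | x + δ • y ∈ E} 0 (s / δ) (ENNReal.ofReal (e * s ^ d / δ ^ d)) ∧
    ∀ ρ, μH[(d:ℝ)] ({y | x + δ • y ∈ E} ∩ closedBall 0 ρ) =
      ENNReal.ofReal (mass d E x (δ * ρ) / δ ^ d) := by
  have hpos : 0 < δ ^ d := by positivity
  refine ⟨?_, ?_, fun ρ => ?_⟩
  · have h1 := isCompact_inter_of_almostMinimal hE hU
    have h2 := image_sim_inter (p := x) hδ E 0 (s / δ)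
    rw [smul_zero, add_zero, mul_div_cancel₀ _ hδ.ne'] at h2
    rw [← h2] at h1
    have h3 := h1.image (f := fun z => δ⁻¹ • (z - x)) (by fun_prop)
    rw [image_image] at h3
    simpa [smul_smul, inv_mul_cancel₀ hδ.ne'] using h3
  · refine QM.sim hδ (η := ENNReal.ofReal (e * s ^ d)) ?_ ?_
    · rw [← ENNReal.ofReal_mul hpos.le]; congr 1; field_simp
    · rw [smul_zero, add_zero, mul_div_cancel₀ _ hδ.ne']
      refine (QM.of_almostMinimal hE hs hU).mono ?_
      rw [ENNReal.ofReal_mul he0, ENNReal.ofReal_pow hs.le]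
      gcongr
  · have h2 := image_sim_inter (p := x) hδ E 0 ρ
    rw [smul_zero, add_zero] at h2
    have h3 := measure_sim d x hδ ({y | x + δ • y ∈ E} ∩ closedBall 0 ρ)
    rw [h2, ← ofReal_mass hE] at h3
    rw [ENNReal.ofReal_div_of_pos hpos, h3, mul_comm,
      ENNReal.mul_div_cancel_right (by simpa using hpos) ENNReal.ofReal_ne_top]

lemma measure_shell {d : ℕ} {E : Set (EuclideanSpace ℝ (Fin n))} {R R' a b : ℝ} (hR : R' ≤ R)
    (hK : IsCompact (E ∩ closedBall 0 R)) (hb : 0 ≤ b)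
    (h1 : μH[(d:ℝ)] (E ∩ closedBall 0 R) = ENNReal.ofReal a)
    (h2 : μH[(d:ℝ)] (E ∩ closedBall 0 R') = ENNReal.ofReal b) :
    μH[(d:ℝ)] ((E ∩ closedBall 0 R) \ closedBall 0 R') = ENNReal.ofReal (a - b) := by
  have e : E ∩ closedBall 0 R ∩ closedBall 0 R' = E ∩ closedBall 0 R' := by
    rw [inter_assoc, inter_eq_right.2 (closedBall_subset_closedBall hR)]
  rw [← sdiff_inter_self_eq_sdiff, inter_comm (closedBall 0 R'), e, measure_sdiff, h1, h2, ENNReal.ofReal_sub _ hb]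
  · rw [← e]; exact inter_subset_left
  · rw [← e]; exact (hK.inter_right isClosed_closedBall).measurableSet.nullMeasurableSet
  · rw [h2]; exact ENNReal.ofReal_ne_top

/-- Decay inequality behind the upper bound. -/
lemma upper_decay {d : ℕ} (hdn : d < n) : ∃ C : ℝ, 1 ≤ C ∧
    ∀ (U E : Set (EuclideanSpace ℝ (Fin n))) (h : ℝ → ℝ≥0∞), IsPlainAlmostMinimal d U h E →
      ∀ (x : EuclideanSpace ℝ (Fin n)) (s δ : ℝ), 0 < δ → δ ≤ s → closedBall x s ⊆ U →
        h s ≤ 1 → mass d E x s ≤ C * (mass d E x s - mass d E x (s - (6 * n + 1) * δ)) +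
          C * (δ ^ d * (s / δ) ^ n) + s ^ d := by
  obtain ⟨C, hC, H⟩ := unit_upper hdn
  refine ⟨C, hC, fun U E h hE x s δ hδ hs hU hh => ?_⟩
  have hs0 : 0 < s := hδ.trans_le hs
  obtain ⟨hK, hQ, hm⟩ := rescale hE hδ hs0 hU zero_le_one (by simpa using hh)
  have hpos : 0 < δ ^ d := by positivity
  have key := H _ _ _ ((one_le_div hδ).2 hs) hK (by rw [hm]; exact ENNReal.ofReal_ne_top) hQ
  have e2 : δ * (s / δ - (6 * n + 1)) = s - (6 * n + 1) * δ := by field_simp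
  have hmono : mass d E x (s - (6 * n + 1) * δ) ≤ mass d E x s :=
    mass_mono hE x (by have : (0:ℝ) ≤ (6 * n + 1) * δ := by positivity
                       linarith)
  rw [measure_shell (a := mass d E x (δ * (s / δ)) / δ ^ d)
    (b := mass d E x (δ * (s / δ - (6 * n + 1))) / δ ^ d)
    (by have : (0:ℝ) ≤ n := by positivity
        linarith) hK (div_nonneg (mass_nonneg _ _ _ _) hpos.le) (hm _) (hm _), hm, e2,
    mul_div_cancel₀ _ hδ.ne', ← sub_div] at key
  have hsub : 0 ≤ (mass d E x s - mass d E x (s - (6 * n + 1) * δ)) / δ ^ d :=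
    div_nonneg (by linarith) hpos.le
  rw [← ENNReal.ofReal_mul (by linarith), ← ENNReal.ofReal_add (by positivity) (by positivity),
    ← ENNReal.ofReal_add (by positivity) (by positivity),
    ENNReal.ofReal_le_ofReal_iff (by positivity), div_le_iff₀ hpos] at key
  refine key.trans (le_of_eq ?_)
  field_simp

/-- Decay inequality behind the lower bound. -/
lemma lower_decay {d : ℕ} (hd : 0 < d) (hdn : d < n) : ∃ C : ℝ, 1 ≤ C ∧
    ∀ (U E : Set (EuclideanSpace ℝ (Fin n))) (h : ℝ → ℝ≥0∞), IsPlainAlmostMinimal d U h E →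
      ∀ (x : EuclideanSpace ℝ (Fin n)) (s δ e : ℝ), 0 < δ → 0 < s → closedBall x s ⊆ U →
        0 ≤ e → h s ≤ ENNReal.ofReal e → n.choose d * mass d E x s ≤ δ ^ d / 2 →
        mass d E x s ≤ C * (mass d E x s - mass d E x (s - (6 * n + 1) * δ)) + e * s ^ d := by
  obtain ⟨C, hC, H⟩ := unit_lower hd hdn
  refine ⟨C, hC, fun U E h hE x s δ e hδ hs0 hU he0 hh hsmall => ?_⟩
  obtain ⟨hK, hQ, hm⟩ := rescale hE hδ hs0 hU he0 hh
  have hpos : 0 < δ ^ d := by positivity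
  have key := H _ _ _ hK (by
    rw [hm, mul_div_cancel₀ _ hδ.ne', ← ENNReal.ofReal_natCast,
      ← ENNReal.ofReal_mul (by positivity)]
    have : (2 : ℝ≥0∞)⁻¹ = ENNReal.ofReal 2⁻¹ := by
      rw [ENNReal.ofReal_inv_of_pos (by norm_num)]; simp
    rw [this]
    apply ENNReal.ofReal_le_ofReal
    rw [← mul_div_assoc, div_le_iff₀ hpos]
    linarith) hQ
  have e2 : δ * (s / δ - (6 * n + 1)) = s - (6 * n + 1) * δ := by field_simp
  have hmono : mass d E x (s - (6 * n + 1) * δ) ≤ mass d E x s :=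
    mass_mono hE x (by have : (0:ℝ) ≤ (6 * n + 1) * δ := by positivity
                       linarith)
  rw [measure_shell (a := mass d E x (δ * (s / δ)) / δ ^ d)
    (b := mass d E x (δ * (s / δ - (6 * n + 1))) / δ ^ d)
    (by have : (0:ℝ) ≤ n := by positivity
        linarith) hK (div_nonneg (mass_nonneg _ _ _ _) hpos.le) (hm _) (hm _), hm, e2,
    mul_div_cancel₀ _ hδ.ne', ← sub_div] at key
  have hsub : 0 ≤ (mass d E x s - mass d E x (s - (6 * n + 1) * δ)) / δ ^ d :=
    div_nonneg (by linarith) hpos.le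
  rw [← ENNReal.ofReal_mul (by linarith), ← ENNReal.ofReal_add (by positivity) (by positivity),
    ENNReal.ofReal_le_ofReal_iff (by positivity), div_le_iff₀ hpos] at key
  refine key.trans (le_of_eq ?_)
  field_simp

/-! ### Iteration of the decay inequalities -/

/-- Bounding the mass in a ball by absorption: the decay inequality is used with `δ` proportional
to the distance to the boundary, and the weight `(S - t) ^ (n - d)` absorbs the skeleton term. -/
lemma upper_iteration {d : ℕ} (hdn : d < n) {C W : ℝ} (hC : 1 ≤ C) (hW : 1 ≤ W) :
    ∃ C' : ℝ, 1 ≤ C' ∧ ∀ (m : ℝ → ℝ) (S M : ℝ), 0 < S → (∀ s, 0 ≤ m s) →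
      (∀ s < S, m s ≤ M) →
      (∀ s δ, 0 < δ → δ ≤ s → s < S →
        m s ≤ C * (m s - m (s - W * δ)) + C * (δ ^ d * (s / δ) ^ n) + s ^ d) →
      m (S / 2) ≤ C' * S ^ d := by
  obtain ⟨N, rfl⟩ : ∃ N, n = d + N := ⟨n - d, by omega⟩
  set θ : ℝ := 1 - 1 / C with hθ
  have hC0 : 0 < C := by linarith
  have hCinv : 0 < 1 / C := by positivity
  have hθ0 : 0 ≤ θ := by
    have : 1 / C ≤ 1 := by rw [div_le_one hC0]; exact hC
    linarith
  have hθ1 : θ < 1 := by linarith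
  set τ : ℝ := (1 + θ) / 2 with hτ
  have hτ1 : τ < 1 := by linarith
  have hτ0 : 0 < τ := by linarith
  set κ : ℝ := (1 - θ) / (2 * (N + 1)) with hκ
  have hκ0 : 0 < κ := div_pos (by linarith) (by positivity)
  have hN0 : (0 : ℝ) ≤ N := by positivity
  have hκN : κ * (N + 1) = (1 - θ) / 2 := by rw [hκ]; field_simp
  have hκ1 : κ < 1 := by nlinarith
  -- the choice of `κ` loses less in the weight than is gained in the mass
  have hθκ : θ ≤ τ * (1 - κ) ^ N := by
    have h1 := one_add_mul_le_pow (a := -κ) (by linarith) N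
    have h2 : τ ≤ (1 - κ) ^ N := by
      rw [← sub_eq_add_neg] at h1
      nlinarith
    nlinarith [sq_nonneg (1 - θ)]
  set P : ℝ := (W / κ) ^ N + 1 with hP
  have hP1 : 1 ≤ P := by have : 0 ≤ (W / κ) ^ N := by positivity
                         linarith
  have hP0 : 0 ≤ P := by linarith
  refine ⟨max 1 (2 ^ N * (P / (1 - τ))), le_max_left _ _, fun m S M hS hm hM H => ?_⟩
  have hM0 : 0 ≤ M := (hm 0).trans (hM 0 hS)
  have step : ∀ t, S / 2 ≤ t → t < S →
      m t * (S - t) ^ N ≤ τ * (m (t + κ * (S - t)) * (S - (t + κ * (S - t))) ^ N) +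
        P * S ^ (d + N) := by
    intro t ht htS
    set u := S - t with hu
    have hu0 : 0 < u := by linarith
    set s := t + κ * u with hs
    have hsS : s < S := by nlinarith
    have hs0 : 0 < s := by nlinarith
    set δ := κ * u / W with hδ
    have hδ0 : 0 < δ := by positivity
    have hδs : δ ≤ s := by
      have : δ ≤ κ * u := div_le_self (by positivity) hW
      nlinarith
    have e1 : s - W * δ = t := by rw [hδ, hs]; field_simp; ring
    have h1 := H s δ hδ0 hδs hsS
    rw [e1] at h1
    have h2 : m t ≤ θ * m s + δ ^ d * (s / δ) ^ (d + N) + s ^ d := by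
      have h3 : C * m t ≤ C * (θ * m s + δ ^ d * (s / δ) ^ (d + N) + s ^ d) := by
        have : C * θ = C - 1 := by rw [hθ]; field_simp
        have h4 : s ^ d ≤ C * s ^ d := le_mul_of_one_le_left (by positivity) hC
        calc C * m t ≤ (C - 1) * m s + C * (δ ^ d * (s / δ) ^ (d + N)) + s ^ d := by linarith
          _ ≤ (C * θ) * m s + C * (δ ^ d * (s / δ) ^ (d + N)) + C * s ^ d := by rw [this]; linarith
          _ = _ := by ring
      exact le_of_mul_le_mul_left h3 hC0
    have e2 : δ ^ d * (s / δ) ^ (d + N) * u ^ N = s ^ (d + N) * (W / κ) ^ N := by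
      have : u = δ * (W / κ) := by rw [hδ]; field_simp
      rw [div_pow s δ, pow_add δ, this, mul_pow δ]
      field_simp
    have e3 : S - s = (1 - κ) * u := by rw [hs, hu]; ring
    have hsp : s ^ (d + N) ≤ S ^ (d + N) := by gcongr
    have hsu : s ^ d * u ^ N ≤ S ^ (d + N) := by
      rw [pow_add]
      have : u ≤ S := by linarith
      gcongr
    calc m t * u ^ N ≤ (θ * m s + δ ^ d * (s / δ) ^ (d + N) + s ^ d) * u ^ N := by gcongr
      _ = θ * (m s * u ^ N) + s ^ (d + N) * (W / κ) ^ N + s ^ d * u ^ N := by rw [← e2]; ring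
      _ ≤ τ * (1 - κ) ^ N * (m s * u ^ N) + S ^ (d + N) * (W / κ) ^ N + S ^ (d + N) := by
          have := hm s
          gcongr
      _ = _ := by rw [e3, mul_pow, hP]; ring
  have hτ' : 0 < 1 - τ := by linarith
  have iter : ∀ k : ℕ, ∀ t, S / 2 ≤ t → t < S →
      m t * (S - t) ^ N ≤ τ ^ k * (M * S ^ N) + P * S ^ (d + N) / (1 - τ) := by
    intro k
    induction k with
    | zero =>
      intro t ht htS
      have h1 : m t * (S - t) ^ N ≤ M * S ^ N := by
        have : 0 ≤ S - t := by linarith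
        gcongr
        · exact hM t htS
        · linarith
      have h2 : 0 ≤ P * S ^ (d + N) / (1 - τ) := by positivity
      simpa using h1.trans (le_add_of_nonneg_right h2)
    | succ k ih =>
      intro t ht htS
      have h1 := ih (t + κ * (S - t)) (by nlinarith) (by nlinarith)
      calc m t * (S - t) ^ N ≤ _ := step t ht htS
        _ ≤ τ * (τ ^ k * (M * S ^ N) + P * S ^ (d + N) / (1 - τ)) + P * S ^ (d + N) := by gcongr
        _ = _ := by field_simp; ring
  have hlim : m (S / 2) * (S - S / 2) ^ N ≤ P * S ^ (d + N) / (1 - τ) := by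
    have ht : Tendsto (fun k : ℕ => τ ^ k * (M * S ^ N) + P * S ^ (d + N) / (1 - τ)) atTop
        (nhds (0 * (M * S ^ N) + P * S ^ (d + N) / (1 - τ))) :=
      ((tendsto_pow_atTop_nhds_zero_of_lt_one hτ0.le hτ1).mul_const _).add_const _
    rw [zero_mul, zero_add] at ht
    exact ge_of_tendsto' ht fun k => iter k _ le_rfl (by linarith)
  have e : S - S / 2 = S / 2 := by ring
  rw [e, div_pow, ← mul_div_assoc, div_le_iff₀ (by positivity)] at hlim
  have hfin : m (S / 2) ≤ 2 ^ N * (P / (1 - τ)) * S ^ d := by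
    refine le_of_mul_le_mul_right (hlim.trans (le_of_eq ?_)) (show 0 < S ^ N by positivity)
    rw [pow_add]; ring
  refine hfin.trans ?_
  gcongr
  exact le_max_right _ _

/-- A small density at one scale persists at half the scale. -/
lemma lower_iteration {d : ℕ} {C W : ℝ} {c : ℕ} (hC : 1 ≤ C) (hW : 1 ≤ W) (hc : 1 ≤ c) :
    ∃ c₁ e : ℝ, 0 < c₁ ∧ 2 ^ d * c₁ ≤ 1 / 2 ∧ 0 < e ∧ ∀ (m : ℝ → ℝ) (r : ℝ), 0 < r →
      Monotone m → (∀ s, 0 ≤ m s) →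
      (∀ s δ, 0 < δ → 0 < s → s ≤ r → c * m s ≤ δ ^ d / 2 →
        m s ≤ C * (m s - m (s - W * δ)) + e * s ^ d) →
      m r ≤ c₁ * r ^ d → m (r / 2) ≤ c₁ * (r / 2) ^ d := by
  set θ : ℝ := 1 - 1 / C with hθ
  have hC0 : 0 < C := by linarith
  have hCinv : 0 < 1 / C := by positivity
  have hθ0 : 0 ≤ θ := by
    have : 1 / C ≤ 1 := by rw [div_le_one hC0]; exact hC
    linarith
  have hθ1 : θ < 1 := by linarith
  have hθ' : 0 < 1 - θ := by linarith
  obtain ⟨K₀, hK₀⟩ := exists_pow_lt_of_lt_one (show (0 : ℝ) < (1 / 2) ^ d / 2 by positivity) hθ1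
  set K := K₀ + 1 with hK
  have hθK : θ ^ K ≤ (1 / 2) ^ d / 2 :=
    (pow_le_pow_of_le_one hθ0 hθ1.le (Nat.le_succ _)).trans hK₀.le
  have hK1 : (1 : ℝ) ≤ K := by rw [hK]; push_cast; linarith [Nat.cast_nonneg (α := ℝ) K₀]
  have hc' : (1 : ℝ) ≤ c := by exact_mod_cast hc
  have hWK : 1 ≤ W * K := one_le_mul_of_one_le_of_one_le hW hK1
  set c₁ : ℝ := 1 / (2 * c * (2 * (W * K)) ^ d) with hc₁
  have hc₁0 : 0 < c₁ := by positivity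
  refine ⟨c₁, (1 - θ) * c₁ * (1 / 2) ^ d / 2, hc₁0, ?_, by positivity,
    fun m r hr hmono hm H hmr => ?_⟩
  · rw [hc₁, ← mul_div_assoc, mul_one, div_le_div_iff₀ (by positivity) (by norm_num), one_mul]
    have h1 : (2 : ℝ) ^ d ≤ (2 * (W * K)) ^ d := by gcongr; linarith
    have h2 : (0 : ℝ) ≤ (2 * (W * K)) ^ d := by positivity
    nlinarith
  set e := (1 - θ) * c₁ * (1 / 2) ^ d / 2 with he
  have he0 : 0 < e := by positivity
  set δ := r / (2 * (W * K)) with hδ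
  have hδ0 : 0 < δ := by positivity
  have hδK : K * (W * δ) = r / 2 := by rw [hδ]; field_simp
  have hWδ : 0 < W * δ := by positivity
  have hsmall : c * m r ≤ δ ^ d / 2 := by
    calc c * m r ≤ c * (c₁ * r ^ d) := by gcongr
      _ = δ ^ d / 2 := by rw [hδ, hc₁, div_pow]; field_simp
  have iter : ∀ j : ℕ, j ≤ K → m (r - j * (W * δ)) ≤ θ ^ j * m r + e * r ^ d / (1 - θ) := by
    intro j
    induction j with
    | zero =>
      intro _
      have : 0 ≤ e * r ^ d / (1 - θ) := by positivity
      simpa using this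
    | succ j ih =>
      intro hj
      have h1 := ih (by omega)
      have hjK : (j : ℝ) ≤ K := by exact_mod_cast (by omega : j ≤ K)
      have hjs : (j : ℝ) * (W * δ) ≤ r / 2 := by rw [← hδK]; gcongr
      set s := r - j * (W * δ) with hs
      have hs0 : 0 < s := by linarith
      have hsr : s ≤ r := by have : 0 ≤ (j : ℝ) * (W * δ) := by positivity
                             linarith
      have h2 := H s δ hδ0 hs0 hsr (le_trans (by have := hmono hsr; gcongr) hsmall)
      have e1 : r - ((j + 1 : ℕ) : ℝ) * (W * δ) = s - W * δ := by rw [hs]; push_cast; ring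
      have h3 : e * s ^ d ≤ C * (e * r ^ d) := by
        calc e * s ^ d ≤ e * r ^ d := by gcongr
          _ ≤ _ := le_mul_of_one_le_left (by positivity) hC
      have h4 : m (s - W * δ) ≤ θ * m s + e * r ^ d := by
        have : C * θ = C - 1 := by rw [hθ]; field_simp
        refine le_of_mul_le_mul_left ?_ hC0
        calc C * m (s - W * δ) ≤ (C - 1) * m s + C * (e * r ^ d) := by linarith
          _ = _ := by rw [← this]; ring
      rw [e1]
      calc m (s - W * δ) ≤ θ * (θ ^ j * m r + e * r ^ d / (1 - θ)) + e * r ^ d := by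
            refine h4.trans ?_; gcongr
        _ = _ := by field_simp; ring
  have h1 := iter K le_rfl
  rw [hδK, show r - r / 2 = r / 2 by ring] at h1
  calc m (r / 2) ≤ _ := h1
    _ ≤ (1 / 2) ^ d / 2 * (c₁ * r ^ d) + e * r ^ d / (1 - θ) := by
        have := hm r
        gcongr
    _ = c₁ * (r / 2) ^ d := by rw [he, div_pow, div_pow, one_pow]; field_simp; norm_num

/-! ### Ahlfors regularity -/

/-- Local Ahlfors regularity of coral plain almost minimal sets. -/
theorem local_ahlfors_regularity (n d : ℕ) (hd : 0 < d) (hdn : d < n) :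
    ∃ ε : ℝ≥0∞, 0 < ε ∧ ∃ C : ℝ, 1 ≤ C ∧
      ∀ (U : Set (EuclideanSpace ℝ (Fin n))) (h : ℝ → ℝ≥0∞) (Eset : Set (EuclideanSpace ℝ (Fin n))),
        IsOpen U → IsGauge h → IsPlainAlmostMinimal d U h Eset → IsCoral d Eset →
        ∀ x ∈ Eset, ∀ r : ℝ, 0 < r → r < 1 → ball x (2*r) ⊆ U → h (2*r) ≤ ε →
          ENNReal.ofReal (C⁻¹ * r ^ d) ≤ μH[(d:ℝ)] (Eset ∩ ball x r) ∧
          μH[(d:ℝ)] (Eset ∩ ball x r) ≤ ENNReal.ofReal (C * r ^ d) := by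
  have hn0 : (0 : ℝ) ≤ n := by positivity
  have hW : (1 : ℝ) ≤ 6 * n + 1 := by linarith
  obtain ⟨Cu, hCu, hup⟩ := upper_decay hdn
  obtain ⟨Cl, hCl, hlow⟩ := lower_decay hd hdn
  obtain ⟨C₂, hC₂, hupper⟩ := upper_iteration hdn hCu hW
  obtain ⟨c₁, e, hc₁, hc₁', he, hlower⟩ := lower_iteration (d := d) hCl hW
    (Nat.choose_pos hdn.le)
  refine ⟨min 1 (ENNReal.ofReal e), by simp [he], max (C₂ * 2 ^ d) (2 ^ d / c₁), ?_, ?_⟩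
  · refine le_trans ?_ (le_max_left _ _)
    exact one_le_mul_of_one_le_of_one_le hC₂ (one_le_pow₀ (by norm_num))
  intro U h E _ hh hE hcoral x hx r hr _ hU hε
  have hgauge : ∀ s, 0 < s → s ≤ 2 * r → h s ≤ 1 ∧ h s ≤ ENNReal.ofReal e := fun s hs hsr =>
    le_min_iff.1 ((hh.1 hs hsr).trans hε)
  constructor
  · by_contra! hcon
    have hdens : ∀ y ∈ E ∩ ball x (r / 2), ∀ k : ℕ,
        mass d E y (r / 2 / 2 ^ k) ≤ c₁ * (r / 2 / 2 ^ k) ^ d := by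
      rintro y ⟨hyE, hyx⟩ k
      rw [mem_ball] at hyx
      induction k with
      | zero =>
        rw [pow_zero, div_one]
        have hsub : closedBall y (r / 2) ⊆ ball x r := closedBall_subset_ball' (by linarith)
        have h1 : mass d E y (r / 2) ≤ (max (C₂ * 2 ^ d) (2 ^ d / c₁))⁻¹ * r ^ d := by
          refine ENNReal.toReal_le_of_le_ofReal (by positivity) ?_
          exact (measure_mono (inter_subset_inter_right _ hsub)).trans hcon.le
        refine h1.trans ?_
        calc _ ≤ (2 ^ d / c₁)⁻¹ * r ^ d := by
              gcongr
              exact le_max_right _ _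
          _ = _ := by rw [inv_div, div_pow]; ring
      | succ k ih =>
        have hr' : 0 < r / 2 / 2 ^ k := by positivity
        have hk : r / 2 / 2 ^ k ≤ r / 2 := div_le_self (by positivity) (one_le_pow₀ (by norm_num))
        have := hlower (mass d E y) _ hr' (mass_mono hE y) (mass_nonneg d E y)
          (fun s δ hδ hs hsr hsm => hlow U E h hE y s δ e hδ hs
            ((closedBall_subset_ball' (by linarith)).trans hU) he.le
            (hgauge s hs (by linarith)).2 hsm) ih
        rwa [pow_succ, ← div_div]
    have hball : 0 < μH[(d:ℝ)] (E ∩ ball x (r / 2)) := hcoral x hx _ (by positivity)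
    refine hball.ne' (measure_zero_of_density hd (hE.2.2.1 x _).ne
      (show 0 < r / 2 by positivity) fun y hy ρ hρ hρr => ?_)
    obtain ⟨k, hk1, hk2⟩ := exists_nat_pow_near_of_lt_one (x := ρ / (r / 2))
      (y := (1 / 2 : ℝ)) (by positivity) (by rw [div_le_one (by positivity)]; exact hρr)
      (by norm_num) (by norm_num)
    rw [lt_div_iff₀ (by positivity)] at hk1
    rw [div_le_iff₀ (by positivity)] at hk2
    have e1 : (1 / 2 : ℝ) ^ k * (r / 2) = r / 2 / 2 ^ k := by
      rw [div_pow, one_pow]; ring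
    have h1 : ρ ≤ r / 2 / 2 ^ k := by rw [← e1]; exact hk2
    have h2 : r / 2 / 2 ^ k ≤ 2 * ρ := by
      rw [← e1]; rw [pow_succ] at hk1; linarith
    have h3 : mass d E y ρ ≤ 2⁻¹ * ρ ^ d := by
      calc mass d E y ρ ≤ mass d E y (r / 2 / 2 ^ k) := mass_mono hE y h1
        _ ≤ c₁ * (r / 2 / 2 ^ k) ^ d := hdens y hy k
        _ ≤ c₁ * (2 * ρ) ^ d := by gcongr
        _ = 2 ^ d * c₁ * ρ ^ d := by rw [mul_pow]; ring
        _ ≤ 1 / 2 * ρ ^ d := by gcongr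
        _ = _ := by ring
    calc μH[(d:ℝ)] (E ∩ ball x (r / 2) ∩ closedBall y ρ) ≤ μH[(d:ℝ)] (E ∩ closedBall y ρ) := by
          gcongr; exact inter_subset_left
      _ ≤ ENNReal.ofReal (2⁻¹ * ρ ^ d) := by
          rw [← ofReal_mass hE]; exact ENNReal.ofReal_le_ofReal h3
      _ = _ := by
          rw [ENNReal.ofReal_mul (by norm_num), ENNReal.ofReal_inv_of_pos (by norm_num)]; simp
  · have h1 := hupper (mass d E x) (2 * r) (μH[(d:ℝ)] (E ∩ ball x (2 * r))).toReal (by positivity)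
      (mass_nonneg d E x)
      (fun s hs => ENNReal.toReal_mono (hE.2.2.1 x _).ne
        (measure_mono (inter_subset_inter_right _ (closedBall_subset_ball hs))))
      (fun s δ hδ hδs hs => hup U E h hE x s δ hδ hδs ((closedBall_subset_ball hs).trans hU)
        (hgauge s (hδ.trans_le hδs) hs.le).1)
    rw [mul_div_cancel_left₀ _ (two_ne_zero)] at h1
    calc μH[(d:ℝ)] (E ∩ ball x r) ≤ μH[(d:ℝ)] (E ∩ closedBall x r) :=
          measure_mono (inter_subset_inter_right _ ball_subset_closedBall)
      _ = ENNReal.ofReal (mass d E x r) := (ofReal_mass hE x r).symm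
      _ ≤ _ := by
          refine ENNReal.ofReal_le_ofReal (h1.trans ?_)
          rw [mul_pow, ← mul_assoc]
          gcongr
          exact le_max_left _ _

end
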